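/- arXiv:2402.02879 — 11 statements merged into one kernel-verified Lean document; each statement's English description precedes it below -/
import Mathlib

section
/- Let A be a Noetherian commutative ring and I ⊆ A an ideal. Let P be a bounded-above cochain complex of A-modules such that every term of P is a flat A-module and P is acyclic (all cohomology modules of P vanish). Then the cochain complex obtained by applying the I-adic completion functor M ↦ Λ_I M degreewise to P is again acyclic. -/
open CategoryTheory

/-- The `I`-adic completion functor on the category of `A`-modules. Applied degreewise
(via `Functor.mapHomologicalComplex`) it computes the degreewise `I`-adic completion of a
cochain complex of `A`-modules. -/
noncomputable def adicCompletionFunctor (A : Type) [CommRing A] (I : Ideal A) :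
    ModuleCat A ⥤ ModuleCat A where
  obj M := ModuleCat.of A (AdicCompletion I M)
  map f := ModuleCat.ofHom ((AdicCompletion.map I f.hom).restrictScalars A)
  map_id M := ModuleCat.hom_ext
    (congrArg (LinearMap.restrictScalars A) (AdicCompletion.map_id I M))
  map_comp f g := ModuleCat.hom_ext
    (congrArg (LinearMap.restrictScalars A) (AdicCompletion.map_comp I f.hom g.hom).symm)

noncomputable instance (A : Type) [CommRing A] (I : Ideal A) :
    (adicCompletionFunctor A I).PreservesZeroMorphisms where
  map_zero M N := ModuleCat.hom_ext
    (congrArg (LinearMap.restrictScalars A) (AdicCompletion.map_zero (M := M) (N := N) I))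

section Helpers

open LinearMap

theorem flat_ker_of_surj {A : Type*} [CommRing A] {N P : Type*} [AddCommGroup N] [Module A N]
    [AddCommGroup P] [Module A P] [Module.Flat A N] [Module.Flat A P] (f : N →ₗ[A] P)
    (hf : Function.Surjective f) : Module.Flat A (ker f) := by
  rw [Module.Flat.iff_rTensor_preserves_injective_linearMap]
  intro X Y _ _ _ _ g hg
  have h1 := LinearMap.lTensor_injective_of_exact_of_flat f hf (ker f).subtype
    (ker f).subtype_injective (LinearMap.exact_subtype_ker_map _) X
  have h2 := Module.Flat.rTensor_preserves_injective_linearMap (M := N) g hg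
  have h3 : (lTensor Y (ker f).subtype) ∘ₗ (rTensor (ker f) g) =
      (rTensor N g) ∘ₗ (lTensor X (ker f).subtype) := by
    rw [LinearMap.lTensor_comp_rTensor, LinearMap.rTensor_comp_lTensor]
  have h4 : Function.Injective ((rTensor N g) ∘ₗ (lTensor X (ker f).subtype)) := h2.comp h1
  rw [← h3] at h4
  exact Function.Injective.of_comp h4

theorem pure_ker_of_surj {A : Type*} [CommRing A] {N P : Type*} [AddCommGroup N] [Module A N]
    [AddCommGroup P] [Module A P] [Module.Flat A P] (f : N →ₗ[A] P)
    (hf : Function.Surjective f) (J : Ideal A) (x : N) (hx : x ∈ (J • ⊤ : Submodule A N))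
    (hfx : f x = 0) : x ∈ J • ker f := by
  have key : ∃ (l : ℕ) (a : Fin l → A) (p : Fin l → N), (∀ i, a i ∈ J) ∧ x = ∑ i, a i • p i := by
    clear hfx
    induction hx using Submodule.smul_induction_on' with
    | smul r hr n hn => exact ⟨1, fun _ => r, fun _ => n, fun _ => hr, by simp⟩
    | add x _ y _ hx hy =>
      obtain ⟨l, a, p, ha, rfl⟩ := hx
      obtain ⟨m, b, q, hb, rfl⟩ := hy
      refine ⟨l + m, Fin.append a b, Fin.append p q, ?_, ?_⟩
      · intro i
        refine Fin.addCases (fun i => ?_) (fun i => ?_) i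
        · simpa using ha i
        · simpa using hb i
      · simp [Fin.sum_univ_add]
  obtain ⟨l, a, p, ha, rfl⟩ := key
  have h0 : ∑ i, a i • f (p i) = 0 := by simpa using hfx
  obtain ⟨k, c, y, hy, hc⟩ := Module.Flat.isTrivialRelation_of_sum_smul_eq_zero h0
  choose s hs using hf
  have : ∑ i, a i • p i = ∑ i, a i • (p i - ∑ j, c i j • s (y j)) := by
    simp only [smul_sub, Finset.sum_sub_distrib]
    symm
    rw [sub_eq_self]
    simp only [Finset.smul_sum, smul_smul]
    rw [Finset.sum_comm]
    simp [← Finset.sum_smul, hc]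
  rw [this]
  refine Submodule.sum_mem _ fun i _ => Submodule.smul_mem_smul (ha i) ?_
  simp [hs, hy]

theorem completion_exact {A : Type*} [CommRing A] (I : Ideal A) {M N P : Type*}
    [AddCommGroup M] [Module A M] [AddCommGroup N] [Module A N]
    [AddCommGroup P] [Module A P] (f : M →ₗ[A] N) (g : N →ₗ[A] P)
    (hfg : ker g ≤ range f)
    (hf : ∀ (J : Ideal A) (x : N), x ∈ (J • ⊤ : Submodule A N) → x ∈ range f → x ∈ J • range f)
    (hg : ∀ (J : Ideal A) (x : P), x ∈ (J • ⊤ : Submodule A P) → x ∈ range g → x ∈ J • range g)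
    (x : AdicCompletion I N) (hx : AdicCompletion.map I g x = 0) :
    ∃ y, AdicCompletion.map I f y = x := by
  obtain ⟨b, rfl⟩ := AdicCompletion.mk_surjective I N x
  have hb (n : ℕ) : g (b n) ∈ (I ^ n • ⊤ : Submodule A P) := by
    simpa using congrArg (fun x ↦ x.val n) hx
  have h1 (n : ℕ) : ∃ e ∈ (I ^ n • ⊤ : Submodule A N), g e = g (b n) := by
    have := hg _ _ (hb n) ⟨_, rfl⟩
    rwa [← Submodule.map_top, ← Submodule.map_smul''] at this
  choose e he hge using h1
  have h2 (n : ℕ) : b n - e n ∈ range f := hfg (by simp [hge])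
  have h3 (n : ℕ) : (b n - e n) - (b (n + 1) - e (n + 1)) ∈ (I ^ n • ⊤ : Submodule A N) := by
    have h4 : b n - b (n + 1) ∈ (I ^ n • ⊤ : Submodule A N) :=
      SModEq.sub_mem.1 (AdicCompletion.AdicCauchySequence.mk_eq_mk (Nat.le_succ n) b).symm
    have h5 : e (n + 1) ∈ (I ^ n • ⊤ : Submodule A N) :=
      Submodule.smul_mono_left (Ideal.pow_le_pow_right (Nat.le_succ n)) (he (n + 1))
    have := Submodule.add_mem _ (Submodule.sub_mem _ h4 (he n)) h5
    convert this using 1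
    abel
  have h6 (n : ℕ) : (⟨_, h2 n⟩ : range f) ≡ ⟨_, h2 (n + 1)⟩
      [SMOD (I ^ n • ⊤ : Submodule A (range f))] := by
    rw [SModEq.sub_mem]
    have h7 := hf _ _ (h3 n) (Submodule.sub_mem _ (h2 n) (h2 (n + 1)))
    have h8 : (I ^ n • range f) = (I ^ n • ⊤ : Submodule A (range f)).map (range f).subtype := by
      rw [Submodule.map_smul'', Submodule.map_top, Submodule.range_subtype]
    rw [h8] at h7
    obtain ⟨w, hw, hw'⟩ := h7
    have h10 : w = (⟨_, h2 n⟩ : range f) - ⟨_, h2 (n + 1)⟩ := Subtype.ext hw'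
    rwa [h10] at hw
  obtain ⟨y, hy⟩ := AdicCompletion.map_surjective I (f := f.rangeRestrict)
    f.surjective_rangeRestrict
    (AdicCompletion.mk I _ (AdicCompletion.AdicCauchySequence.mk I (range f) _ h6))
  refine ⟨y, ?_⟩
  have h9 : f = (range f).subtype ∘ₗ f.rangeRestrict := rfl
  rw [h9, ← AdicCompletion.map_comp_apply, hy, AdicCompletion.map_mk]
  ext n
  simp only [AdicCompletion.mk_apply_coe, Submodule.mkQ_apply]
  refine (Submodule.Quotient.eq _).2 ?_
  simpa using he n

theorem flat_range_d {A : Type*} [CommRing A] (P : CochainComplex (ModuleCat A) ℤ)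
    (hbdd : ∃ n : ℤ, ∀ i : ℤ, n < i → Limits.IsZero (P.X i))
    (hflat : ∀ i : ℤ, Module.Flat A (P.X i))
    (hex : ∀ i j k : ℤ, i + 1 = j → j + 1 = k → range (P.d i j).hom = ker (P.d j k).hom) :
    ∀ i j : ℤ, i + 1 = j → Module.Flat A (range (P.d i j).hom) := by
  obtain ⟨n, hn⟩ := hbdd
  have key : ∀ (m : ℕ) (i j : ℤ), i + 1 = j → n < j + m →
      Module.Flat A (range (P.d i j).hom) := by
    intro m
    induction m with
    | zero =>
      intro i j hij hj
      have : Subsingleton (P.X j) := ModuleCat.subsingleton_of_isZero (hn j (by simpa using hj))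
      infer_instance
    | succ m ih =>
      intro i j hij hj
      have h1 := ih j (j + 1) rfl (by push_cast at hj; lia)
      have h2 := hflat j
      rw [hex i j (j + 1) hij rfl, ← LinearMap.ker_rangeRestrict]
      exact flat_ker_of_surj _ (LinearMap.surjective_rangeRestrict _)
  intro i j hij
  exact key (n + 1 - j).toNat i j hij (by lia)

end Helpers

/-- If `P` is a bounded-above acyclic cochain complex of flat modules over a noetherian
commutative ring `A`, then the degreewise `I`-adic completion of `P` is again acyclic. -/
theorem stmt0 (A : Type) [CommRing A] [IsNoetherianRing A] (I : Ideal A)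
    (P : CochainComplex (ModuleCat A) ℤ)
    (hbdd : ∃ n : ℤ, ∀ i : ℤ, n < i → Limits.IsZero (P.X i))
    (hflat : ∀ i : ℤ, Module.Flat A (P.X i))
    (hacyclic : ∀ i : ℤ, P.ExactAt i) :
    ∀ i : ℤ, (((adicCompletionFunctor A I).mapHomologicalComplex
      (ComplexShape.up ℤ)).obj P).ExactAt i := by
  have hex : ∀ i j k : ℤ, i + 1 = j → j + 1 = k →
      LinearMap.range (P.d i j).hom = LinearMap.ker (P.d j k).hom := by
    intro i j k hij hjk
    have := hacyclic j
    rw [HomologicalComplex.exactAt_iff' _ i j k (by simp; lia) (by simp; lia),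
      ShortComplex.moduleCat_exact_iff_range_eq_ker] at this
    exact this
  have hfl := flat_range_d P hbdd hflat hex
  have hpure : ∀ i j : ℤ, i + 1 = j → ∀ (J : Ideal A) (x : P.X j),
      x ∈ (J • ⊤ : Submodule A (P.X j)) → x ∈ LinearMap.range (P.d i j).hom →
      x ∈ J • LinearMap.range (P.d i j).hom := by
    intro i j hij J x hx hxr
    have := hfl j (j + 1) rfl
    rw [hex i j (j + 1) hij rfl, ← LinearMap.ker_rangeRestrict] at hxr ⊢
    exact pure_ker_of_surj _ (LinearMap.surjective_rangeRestrict _) J x hx hxr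
  intro j
  rw [HomologicalComplex.exactAt_iff' _ (j - 1) j (j + 1) (by simp) (by simp),
    ShortComplex.moduleCat_exact_iff]
  intro x hx
  exact completion_exact I (P.d (j - 1) j).hom (P.d j (j + 1)).hom
    (hex _ _ _ (by lia) rfl).ge (hpure _ _ (by lia)) (hpure _ _ rfl) x hx
end

section
/- Let A be a Noetherian commutative ring with an ideal I ⊆ A, let B be a Noetherian commutative A-algebra and let J ⊆ B be an ideal with I·B ⊆ J. For every A-module M, the map M ⊗_A B → (Λ_I M) ⊗_A B induced by the canonical completion map M → Λ_I M becomes an isomorphism after applying the J-adic completion functor: Λ_J(M ⊗_A B) ≅ Λ_J((Λ_I M) ⊗_A B). -/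
open TensorProduct

theorem aux_tmul_mem {A : Type} [CommRing A] (I : Ideal A)
    {B : Type} [CommRing B] [Algebra A B] (J : Ideal B)
    (hIJ : I.map (algebraMap A B) ≤ J)
    {P : Type} [AddCommGroup P] [Module A P] (n : ℕ) (p : P)
    (hp : p ∈ (I ^ n • ⊤ : Submodule A P)) (b : B) :
    (b ⊗ₜ[A] p) ∈ (J ^ n • ⊤ : Submodule B (B ⊗[A] P)) := by
  induction hp using Submodule.smul_induction_on' with
  | smul a ha x hx =>
    have h1 : algebraMap A B a ∈ J ^ n := by
      have := Ideal.mem_map_of_mem (algebraMap A B) ha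
      rw [Ideal.map_pow] at this
      exact Ideal.pow_right_mono hIJ n this
    have h2 : b ⊗ₜ[A] (a • x) = (algebraMap A B a) • (b ⊗ₜ[A] x) := by
      rw [TensorProduct.tmul_smul, algebraMap_smul]
    rw [h2]
    exact Submodule.smul_mem_smul h1 trivial
  | add x hx y hy h1 h2 =>
    rw [TensorProduct.tmul_add]
    exact add_mem h1 h2

theorem aux_inj {A : Type} [CommRing A] (I : Ideal A)
    {B : Type} [CommRing B] [Algebra A B] (J : Ideal B)
    (hIJ : I.map (algebraMap A B) ≤ J)
    (M : Type) [AddCommGroup M] [Module A M] (n : ℕ) :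
    Function.Injective
      (((AdicCompletion.of I M).baseChange B).reduceModIdeal (J ^ n)) := by
  rw [injective_iff_map_eq_zero]
  intro x hx
  obtain ⟨y, rfl⟩ := Submodule.Quotient.mk_surjective _ x
  rw [LinearMap.reduceModIdeal_apply, Submodule.Quotient.mk_eq_zero] at hx
  let q : (B ⊗[A] M) →ₗ[B] (B ⊗[A] M) ⧸ (J ^ n • ⊤ : Submodule B (B ⊗[A] M)) :=
    Submodule.mkQ _
  let h : M →ₗ[A] (B ⊗[A] M) ⧸ (J ^ n • ⊤ : Submodule B (B ⊗[A] M)) :=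
    (q.restrictScalars A) ∘ₗ (TensorProduct.mk A B M 1)
  let h' : (M ⧸ (I ^ n • ⊤ : Submodule A M)) →ₗ[A] _ :=
    Submodule.liftQ (I ^ n • ⊤ : Submodule A M) h (by
      intro m hm
      exact (Submodule.Quotient.mk_eq_zero _).2 (aux_tmul_mem I J hIJ n m hm 1))
  let g : B ⊗[A] (AdicCompletion I M) →ₗ[B] (B ⊗[A] M) ⧸ (J ^ n • ⊤ : Submodule B (B ⊗[A] M)) :=
    TensorProduct.AlgebraTensorModule.lift
      ((LinearMap.toSpanSingleton B _ (h' ∘ₗ AdicCompletion.eval I M n)))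
  have hg : g ∘ₗ ((AdicCompletion.of I M).baseChange B) = q := by
    ext m
    simp [g, h', h, q]
    rfl
  have hz : g (((AdicCompletion.of I M).baseChange B) y) = 0 := by
    have h1 := Submodule.mem_map_of_mem (f := g) hx
    rw [Submodule.map_smul''] at h1
    have h2 := Submodule.smul_mono (le_refl (J ^ n)) (le_top (a := Submodule.map g ⊤)) h1
    have h3 : (J ^ n • ⊤ : Submodule B ((B ⊗[A] M) ⧸ (J ^ n • ⊤ : Submodule B (B ⊗[A] M)))) = ⊥ := by
      have : (⊤ : Submodule B ((B ⊗[A] M) ⧸ (J ^ n • ⊤ : Submodule B (B ⊗[A] M)))) =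
          Submodule.map q ⊤ := by
        rw [Submodule.map_top, Submodule.range_mkQ]
      rw [this, ← Submodule.map_smul'', Submodule.mkQ_map_self]
    rw [h3] at h2
    exact h2
  exact (LinearMap.congr_fun hg y).symm.trans hz

theorem aux_surj {A : Type} [CommRing A] (I : Ideal A) (hI : I.FG)
    {B : Type} [CommRing B] [Algebra A B] (J : Ideal B)
    (hIJ : I.map (algebraMap A B) ≤ J)
    (M : Type) [AddCommGroup M] [Module A M] (n : ℕ) :
    Function.Surjective
      (((AdicCompletion.of I M).baseChange B).reduceModIdeal (J ^ n)) := by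
  intro z
  obtain ⟨w, rfl⟩ := Submodule.Quotient.mk_surjective _ z
  induction w using TensorProduct.induction_on with
  | zero => exact ⟨0, by simp⟩
  | add x y hx hy =>
    obtain ⟨a, ha⟩ := hx
    obtain ⟨b, hb⟩ := hy
    exact ⟨a + b, by rw [map_add, ha, hb, Submodule.Quotient.mk_add]⟩
  | tmul b x =>
    obtain ⟨m, hm⟩ := Submodule.Quotient.mk_surjective _ (x.val n)
    refine ⟨Submodule.Quotient.mk (b ⊗ₜ m), ?_⟩
    rw [LinearMap.reduceModIdeal_apply, Submodule.Quotient.eq, LinearMap.baseChange_tmul,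
      ← TensorProduct.tmul_sub]
    apply aux_tmul_mem I J hIJ
    rw [AdicCompletion.pow_smul_top_eq_ker_eval hI, LinearMap.mem_ker, map_sub, sub_eq_zero]
    exact hm

/-- Let `A` be noetherian with ideal `I`, `B` a noetherian `A`-algebra and `J ⊆ B` an ideal
containing `I·B` (continuity of `A → B` for the adic topologies). For every `A`-module `M`, the
base change to `B` of the canonical completion map `M → Λ_I M` becomes an isomorphism after
applying the `J`-adic completion functor. -/
theorem stmt2 (A : Type) [CommRing A] [IsNoetherianRing A] (I : Ideal A)
    (B : Type) [CommRing B] [IsNoetherianRing B] [Algebra A B] (J : Ideal B)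
    (hIJ : I.map (algebraMap A B) ≤ J)
    (M : Type) [AddCommGroup M] [Module A M] :
    Function.Bijective
      (AdicCompletion.map J ((AdicCompletion.of I M).baseChange B)) := by
  have hinj := aux_inj I J hIJ M
  have hsurj := aux_surj I (IsNoetherian.noetherian I) J hIJ M
  constructor
  · intro x y hxy
    ext n
    apply hinj n
    exact congrArg (fun t => t.val n) hxy
  · intro z
    choose x hx using fun n => hsurj n (z.val n)
    refine ⟨⟨x, ?_⟩, ?_⟩
    · intro m n hmn
      apply hinj m
      have h := LinearMap.congr_fun (AdicCompletion.transitionMap_comp_reduceModIdeal J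
        ((AdicCompletion.of I M).baseChange B) hmn) (x n)
      refine h.symm.trans ?_
      rw [hx m, ← z.property hmn, ← hx n]
      rfl
    · ext n
      exact hx n
end

section
/- Let A be a Noetherian commutative ring, I ⊆ A an ideal, and Â = Λ_I A the I-adic completion of A, viewed as an A-algebra via the canonical map A → Â. Then the module of Kähler differentials satisfies Ω_{Â/A} = (I·Â)·Ω_{Â/A}; consequently the (I·Â)-adic completion of Ω_{Â/A} is the zero module. -/
/-- For a noetherian commutative ring `A` with ideal `I` and `Â = Λ_I A` the `I`-adic completion
(an `A`-algebra via the canonical map), the Kähler differentials satisfy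
`Ω_{Â/A} = (I·Â)·Ω_{Â/A}`; consequently the `(I·Â)`-adic completion of `Ω_{Â/A}` vanishes. -/
theorem stmt3 (A : Type) [CommRing A] [IsNoetherianRing A] (I : Ideal A) :
    (I.map (algebraMap A (AdicCompletion I A))) •
        (⊤ : Submodule (AdicCompletion I A)
          (KaehlerDifferential A (AdicCompletion I A))) = ⊤ ∧
      Subsingleton (AdicCompletion (I.map (algebraMap A (AdicCompletion I A)))
        (KaehlerDifferential A (AdicCompletion I A))) := by
  have key : (I.map (algebraMap A (AdicCompletion I A))) •
        (⊤ : Submodule (AdicCompletion I A)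
          (KaehlerDifferential A (AdicCompletion I A))) = ⊤ := by
    rw [eq_top_iff, ← KaehlerDifferential.span_range_derivation, Submodule.span_le]
    rintro _ ⟨x, rfl⟩
    rw [KaehlerDifferential.span_range_derivation]
    have hker := AdicCompletion.ker_evalOneₐ_eq_map I (IsNoetherian.noetherian I)
    obtain ⟨a, ha⟩ := Ideal.Quotient.mk_surjective (AdicCompletion.evalOneₐ I x)
    have hy : x - algebraMap A (AdicCompletion I A) a ∈
        I.map (algebraMap A (AdicCompletion I A)) := by
      rw [← hker, RingHom.mem_ker, map_sub, sub_eq_zero]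
      exact ha.symm
    have hx : KaehlerDifferential.D A (AdicCompletion I A) x =
        KaehlerDifferential.D A (AdicCompletion I A)
          (x - algebraMap A (AdicCompletion I A) a) := by
      rw [map_sub, Derivation.map_algebraMap, sub_zero]
    rw [hx]
    generalize x - algebraMap A (AdicCompletion I A) a = y at hy
    rw [Ideal.map] at hy
    induction hy using Submodule.span_induction with
    | mem y h =>
      obtain ⟨i, _, rfl⟩ := h
      rw [Derivation.map_algebraMap]
      exact Submodule.zero_mem _
    | zero => rw [map_zero]; exact Submodule.zero_mem _
    | add u v _ _ hu hv => rw [map_add]; exact Submodule.add_mem _ hu hv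
    | smul b y hy h =>
      rw [smul_eq_mul, Derivation.leibniz]
      exact Submodule.add_mem _ (Submodule.smul_mem _ _ h)
        (Submodule.smul_mem_smul hy Submodule.mem_top)
  refine ⟨key, ⟨fun u v => ?_⟩⟩
  have hp : ∀ n : ℕ, (I.map (algebraMap A (AdicCompletion I A))) ^ n •
        (⊤ : Submodule (AdicCompletion I A)
          (KaehlerDifferential A (AdicCompletion I A))) = ⊤ := by
    intro n
    induction n with
    | zero => simp
    | succ n ih => rw [pow_succ, Submodule.mul_smul, key, ih]
  apply AdicCompletion.ext
  intro n
  exact (Submodule.Quotient.subsingleton_iff.mpr (hp n)).elim _ _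
end

section
/- Let p : B → B' be a surjective homomorphism of commutative rings whose kernel M satisfies M² = 0 and is finitely generated as an ideal of B. Assume that B' is Noetherian and that B' is I'-adically complete (complete and separated) for an ideal I' ⊆ B'. Then B is Noetherian, and B is I-adically complete for the ideal I := p⁻¹(I'). -/
theorem stmt4 {B B' : Type} [CommRing B] [CommRing B'] (p : B →+* B')
    (hsurj : Function.Surjective p)
    (hfg : (RingHom.ker p).FG)
    (hsq : (RingHom.ker p) ^ 2 = ⊥)
    [IsNoetherianRing B'] (I' : Ideal B') [IsAdicComplete I' B'] :
    IsNoetherianRing B ∧ IsAdicComplete (I'.comap p) B := by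
  have hmul : ∀ x y, p x = 0 → p y = 0 → x * y = 0 := by
    intro x y hx hy
    have : x * y ∈ (RingHom.ker p) ^ 2 := by
      rw [pow_two]; exact Ideal.mul_mem_mul hx hy
    rwa [hsq] at this
  have hN : IsNoetherianRing B := by
    apply IsNoetherianRing.of_prime
    intro P hP
    have hle : RingHom.ker p ≤ P := fun x hx => by
      have := hmul x x hx hx
      exact (or_self_iff.1 (hP.mem_or_mem (this ▸ P.zero_mem)))
    refine Ideal.fg_of_fg_map_of_fg_inf_ker_of_surjective (f := p)
      (IsNoetherian.noetherian (P.map p)) ?_ hsurj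
    rw [inf_eq_right.2 hle]; exact hfg
  refine ⟨hN, ?_⟩
  set I := I'.comap p with hI
  have hmapn : ∀ n, (I ^ n).map p = I' ^ n := fun n => by
    rw [Ideal.map_pow, hI, Ideal.map_comap_of_surjective p hsurj]
  have hmem : ∀ n x, p x ∈ I' ^ n → ∃ y ∈ I ^ n, p y = p x := by
    intro n x hx
    rw [← hmapn n] at hx
    exact (Ideal.mem_map_iff_of_surjective p hsurj).1 hx
  have hmem' : ∀ n x, x ∈ I ^ n → p x ∈ I' ^ n := fun n x hx => by
    rw [← hmapn n]; exact Ideal.mem_map_of_mem p hx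
  have hprec : ∀ f : ℕ → B', (∀ n, f (n+1) - f n ∈ I' ^ n) → ∃ L, ∀ n, f n - L ∈ I' ^ n := by
    intro f hf
    obtain ⟨L, hL⟩ := IsPrecomplete.prec (I := I') (M := B') inferInstance (f := f) (by
      intro m n hmn
      rw [SModEq.sub_mem, smul_eq_mul, Ideal.mul_top]
      induction n, hmn using Nat.le_induction with
      | base => simp
      | succ n hmn ih =>
        have := sub_mem ih (Ideal.pow_le_pow_right hmn (hf n))
        convert this using 1; ring)
    refine ⟨L, fun n => ?_⟩
    have := hL n
    rwa [SModEq.sub_mem, smul_eq_mul, Ideal.mul_top] at this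
  have hJ : I ≤ Ideal.jacobson ⊥ := by
    intro x hx
    rw [Ideal.mem_jacobson_bot]
    intro y
    have h1 : p x ∈ Ideal.jacobson (⊥ : Ideal B') := IsAdicComplete.le_jacobson_bot I' hx
    rw [Ideal.mem_jacobson_bot] at h1
    obtain ⟨u, hu⟩ := isUnit_iff_exists_inv.1 (h1 (p y))
    obtain ⟨v, rfl⟩ := hsurj u
    have h2 : p ((x * y + 1) * v - 1) = 0 := by simp [hu]
    have h3 := hmul _ _ h2 h2
    refine isUnit_iff_exists_inv.2 ⟨v * (2 - (x*y+1)*v), ?_⟩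
    linear_combination -h3
  have hH : IsHausdorff I B := IsHausdorff.of_le_jacobson I B hJ
  refine { hH with prec' := ?_ }
  intro f hf
  have hf1 : ∀ n, f (n+1) - f n ∈ I ^ n := fun n => by
    have := (hf (Nat.le_succ n)).symm
    rwa [SModEq.sub_mem, smul_eq_mul, Ideal.mul_top] at this
  simp only [SModEq.sub_mem, smul_eq_mul, Ideal.mul_top]
  obtain ⟨L', hL'⟩ := hprec (fun n => p (f n)) (fun n => by
    have := hmem' _ _ (hf1 n); rwa [map_sub] at this)
  obtain ⟨l, rfl⟩ := hsurj L'
  have h4 : ∀ n, ∃ y ∈ I ^ n, p y = p (f n - l) := fun n => hmem n _ (by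
    rw [map_sub]; exact hL' n)
  choose y hy hpy using h4
  -- m n = f n - l - y n in the kernel
  set m : ℕ → B := fun n => f n - l - y n with hm
  have hm0 : ∀ n, p (m n) = 0 := fun n => by
    have := hpy n
    simp only [hm, map_sub] at this ⊢
    rw [this]; ring
  have hm1 : ∀ n, m (n+1) - m n ∈ I ^ n := fun n => by
    have : m (n+1) - m n = (f (n+1) - f n) - y (n+1) + y n := by simp only [hm]; ring
    rw [this]
    exact add_mem (sub_mem (hf1 n) (Ideal.pow_le_pow_right (Nat.le_succ n) (hy _))) (hy n)
  obtain ⟨c, hc⟩ := Ideal.exists_pow_inf_eq_pow_smul I (RingHom.ker p : Submodule B B)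
  obtain ⟨r, g, hg⟩ := Submodule.fg_iff_exists_fin_generating_family.1 hfg
  have hg0 : ∀ i, p (g i) = 0 := fun i => by
    have : g i ∈ RingHom.ker p := by rw [← hg]; exact Submodule.subset_span ⟨i, rfl⟩
    exact this
  have h5 : ∀ n, ∃ a : Fin r → B, (∀ i, a i ∈ I ^ n) ∧
      ∑ i, a i * g i = m (n + c + 1) - m (n + c) := by
    intro n
    have h6 : m (n+c+1) - m (n+c) ∈ (I ^ (n+c) • ⊤ ⊓ RingHom.ker p : Submodule B B) := by
      refine ⟨by rw [smul_eq_mul, Ideal.mul_top]; exact hm1 _, ?_⟩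
      change p _ = 0
      rw [map_sub, hm0, hm0, sub_zero]
    rw [hc _ (Nat.le_add_left _ _), Nat.add_sub_cancel] at h6
    have h7 := Submodule.smul_mono (le_refl (I ^ n)) inf_le_right h6
    rw [← hg, Submodule.mem_ideal_smul_span_iff_exists_sum] at h7
    obtain ⟨a, ha, hs⟩ := h7
    refine ⟨a, ha, ?_⟩
    rw [← hs, Finsupp.sum_fintype _ _ (by simp)]
    simp
  choose a ha has using h5
  have h8 : ∀ i, ∃ b : B, ∀ n, p (∑ k ∈ Finset.range n, a k i - b) ∈ I' ^ n := by
    intro i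
    obtain ⟨b, hb⟩ := hprec (fun n => p (∑ k ∈ Finset.range n, a k i)) (fun n => by
      rw [Finset.sum_range_succ, map_add, add_sub_cancel_left]
      exact hmem' _ _ (ha n i))
    obtain ⟨b, rfl⟩ := hsurj b
    exact ⟨b, fun n => by rw [map_sub]; exact hb n⟩
  choose b hb using h8
  have h9 : ∀ n, m (n + c) = m c + ∑ i, (∑ k ∈ Finset.range n, a k i) * g i := by
    intro n
    induction n with
    | zero => simp
    | succ n ih =>
      simp only [Finset.sum_range_succ, add_mul, Finset.sum_add_distrib]
      rw [← add_assoc, ← ih, has]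
      rw [show n + 1 + c = n + c + 1 by ring]; ring
  have h10 : ∀ n, m (n + c) - (m c + ∑ i, b i * g i) ∈ I ^ n := by
    intro n
    rw [h9, add_sub_add_left_eq_sub, ← Finset.sum_sub_distrib]
    refine sum_mem fun i _ => ?_
    obtain ⟨z, hz, hpz⟩ := hmem n _ (hb i n)
    have := hmul (z - (∑ k ∈ Finset.range n, a k i - b i)) (g i) (by rw [map_sub, hpz, sub_self]) (hg0 i)
    rw [show (∑ k ∈ Finset.range n, a k i) * g i - b i * g i = z * g i by linear_combination -this]
    exact Ideal.mul_mem_right _ _ hz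
  refine ⟨l + (m c + ∑ i, b i * g i), fun n => ?_⟩
  have h11 : f n - f (n + c) ∈ I ^ n := by
    have := hf (Nat.le_add_right n c)
    rwa [SModEq.sub_mem, smul_eq_mul, Ideal.mul_top] at this
  have h12 := Ideal.pow_le_pow_right (Nat.le_add_right n c) (hy (n+c))
  have : f n - (l + (m c + ∑ i, b i * g i)) = (f n - f (n+c)) + y (n+c)
      + (m (n + c) - (m c + ∑ i, b i * g i)) := by
    have : m (n+c) = f (n+c) - l - y (n+c) := rfl
    rw [this]; ring
  rw [this]
  exact add_mem (add_mem h11 h12) (h10 n)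
end

section
/- Let A → B be a homomorphism of commutative rings with B Noetherian, let K ⊆ B be an ideal, and let C = Λ_K B be the K-adic completion of B, regarded as an A-algebra via A → B → C. Then the canonical C-linear map Ω_{B/A} ⊗_B C → Ω_{C/A}, induced by functoriality of Kähler differentials, becomes an isomorphism after applying the (K·C)-adic completion functor to both sides. -/
open TensorProduct in
lemma aux_deriv_mem {A B M : Type*} [CommRing A] [CommRing B] [Algebra A B] [AddCommGroup M]
    [Module A M] [Module B M] (D : Derivation A B M) (I : Ideal B) (k : ℕ) :
    ∀ x ∈ I ^ (k + 1), D x ∈ (I ^ k • ⊤ : Submodule B M) := by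
  induction k with
  | zero => intro x _; simp
  | succ k ih =>
    intro x hx
    rw [pow_succ] at hx
    induction hx using Submodule.mul_induction_on' with
    | mem_mul_mem a ha b hb =>
      rw [D.leibniz]
      refine add_mem (Submodule.smul_mem_smul ha trivial) ?_
      rw [pow_succ', mul_smul]
      exact Submodule.smul_mem_smul hb (ih a ha)
    | add a _ b _ h1 h2 => rw [map_add]; exact add_mem h1 h2

open TensorProduct in
lemma aux_tmul_mem_s5 {B C M : Type*} [CommRing B] [CommRing C] [Algebra B C] [AddCommGroup M]
    [Module B M] (K : Ideal B) (k : ℕ) (m : M) (hm : m ∈ (K ^ k • ⊤ : Submodule B M)) :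
    (1 : C) ⊗ₜ[B] m ∈ ((K.map (algebraMap B C)) ^ k • ⊤ : Submodule C (C ⊗[B] M)) := by
  induction hm using Submodule.smul_induction_on' with
  | smul r hr n _ =>
    rw [TensorProduct.tmul_smul, ← algebraMap_smul C r]
    refine Submodule.smul_mem_smul ?_ trivial
    rw [← Ideal.map_pow]
    exact Ideal.mem_map_of_mem _ hr
  | add a _ b _ h1 h2 => rw [TensorProduct.tmul_add]; exact add_mem h1 h2

lemma aux_map_bij {C M N : Type*} [CommRing C] [AddCommGroup M] [AddCommGroup N] [Module C M]
    [Module C N] (J : Ideal C) (f : M →ₗ[C] N)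
    (h : ∀ k, Function.Bijective (f.reduceModIdeal (J ^ k))) :
    Function.Bijective (AdicCompletion.map J f) := by
  constructor
  · intro x y hxy
    ext n
    apply (h n).1
    rw [← AdicCompletion.map_val_apply, ← AdicCompletion.map_val_apply, hxy]
  · intro y
    choose g hg using fun n => (h n).2 (y.val n)
    refine ⟨⟨g, fun {m n} hmn => (h m).1 ?_⟩, ?_⟩
    · rw [hg, ← y.2 hmn, ← hg n]
      have := AdicCompletion.transitionMap_comp_reduceModIdeal J f hmn
      exact (LinearMap.congr_fun this (g n)).symm
    · ext n
      exact hg n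

open TensorProduct KaehlerDifferential in
lemma aux_main {A B C : Type*} [CommRing A] [CommRing B] [CommRing C] [Algebra A B] [Algebra B C]
    [Algebra A C] [IsScalarTower A B C] (K : Ideal B)
    (h1 : ∀ (k : ℕ) (c : C), ∃ b : B, c - algebraMap B C b ∈ (K.map (algebraMap B C)) ^ k)
    (h2 : ∀ (k : ℕ) (b : B), algebraMap B C b ∈ (K.map (algebraMap B C)) ^ k → b ∈ K ^ k) :
    Function.Bijective (AdicCompletion.map (K.map (algebraMap B C))
        (KaehlerDifferential.mapBaseChange A B C)) := by
  apply aux_map_bij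
  intro k
  set J := K.map (algebraMap B C) with hJ
  choose s hs using h1 (k + 1)
  let P := (J ^ k • ⊤ : Submodule C (C ⊗[B] Ω[B⁄A]))
  let q : B → (C ⊗[B] Ω[B⁄A]) ⧸ P := fun b => P.mkQ ((1 : C) ⊗ₜ D A B b)
  have hsmul : ∀ (c : C) (b : B), c - algebraMap B C b ∈ J ^ (k + 1) →
      ∀ x : (C ⊗[B] Ω[B⁄A]) ⧸ P, c • x = algebraMap B C b • x := by
    intro c b hcb x
    obtain ⟨x, rfl⟩ := P.mkQ_surjective x
    rw [← sub_eq_zero, ← sub_smul, ← map_smul, Submodule.mkQ_apply, Submodule.Quotient.mk_eq_zero]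
    exact Submodule.smul_mem_smul (Ideal.pow_le_pow_right (Nat.le_succ k) hcb) trivial
  have hq0 : ∀ b b', algebraMap B C b - algebraMap B C b' ∈ J ^ (k + 1) → q b = q b' := by
    intro b b' h
    rw [← map_sub] at h
    have := aux_tmul_mem_s5 (C := C) K k _ (aux_deriv_mem (D A B) K k _ (h2 _ _ h))
    rw [map_sub, TensorProduct.tmul_sub] at this
    exact (Submodule.Quotient.eq _).2 this
  have hq : ∀ c b, c - algebraMap B C b ∈ J ^ (k + 1) → q (s c) = q b := by
    intro c b h
    apply hq0
    have := sub_mem h (hs c)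
    simpa using this
  have qadd : ∀ b b', q (b + b') = q b + q b' := by
    intro b b'; simp [q, TensorProduct.tmul_add]
  have qmul : ∀ b b', q (b * b') = algebraMap B C b • q b' + algebraMap B C b' • q b := by
    intro b b'
    simp only [q, Derivation.leibniz, TensorProduct.tmul_add, map_add, TensorProduct.tmul_smul,
      ← algebraMap_smul C b, ← algebraMap_smul C b', map_smul]
  have qalg : ∀ a, q (algebraMap A B a) = 0 := by
    intro a; simp [q]
  let E₀ : C →+ (C ⊗[B] Ω[B⁄A]) ⧸ P := AddMonoidHom.mk' (fun c => q (s c)) (by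
    intro c c'
    rw [← qadd]
    apply hq
    rw [map_add, add_sub_add_comm]
    exact add_mem (hs c) (hs c'))
  have Emul : ∀ c c', E₀ (c * c') = c • E₀ c' + c' • E₀ c := by
    intro c c'
    change q (s (c * c')) = c • q (s c') + c' • q (s c)
    rw [hsmul c _ (hs c), hsmul c' _ (hs c'), ← qmul]
    apply hq
    rw [map_mul]
    have : c * c' - algebraMap B C (s c) * algebraMap B C (s c') =
      c * (c' - algebraMap B C (s c')) + algebraMap B C (s c') * (c - algebraMap B C (s c)) := by
      ring
    rw [this]
    exact add_mem (Ideal.mul_mem_left _ _ (hs _)) (Ideal.mul_mem_left _ _ (hs _))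
  have Ealg : ∀ b, E₀ (algebraMap B C b) = q b := by
    intro b
    apply hq
    simp
  let E : Derivation A C ((C ⊗[B] Ω[B⁄A]) ⧸ P) := Derivation.mk'
    { E₀ with
      map_smul' := by
        intro a c
        change E₀ (a • c) = a • E₀ c
        rw [Algebra.smul_def, Emul, IsScalarTower.algebraMap_apply A B C, Ealg, qalg, smul_zero,
          add_zero, ← IsScalarTower.algebraMap_apply, algebraMap_smul] } Emul
  have hE : ∀ x, E.liftKaehlerDifferential (mapBaseChange A B C x) = P.mkQ x := by
    intro x
    induction x with
    | zero => simp
    | add x y hx hy => simp only [map_add, hx, hy]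
    | tmul c w =>
      have hw : w ∈ Submodule.span B (Set.range (D A B)) := by
        rw [span_range_derivation]; trivial
      induction hw using Submodule.span_induction with
      | zero => simp
      | add x y _ _ hx hy => simp only [TensorProduct.tmul_add, map_add, hx, hy]
      | smul b x _ hx =>
        rw [TensorProduct.tmul_smul, ← algebraMap_smul C b, map_smul, map_smul, map_smul, hx]
      | mem x hx =>
        obtain ⟨b, rfl⟩ := hx
        rw [mapBaseChange_tmul, map_smul, map_D, Derivation.liftKaehlerDifferential_comp_D]
        change c • E₀ (algebraMap B C b) = _
        rw [Ealg]
        simp only [q]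
        rw [← map_smul, TensorProduct.smul_tmul', smul_eq_mul, mul_one]
  constructor
  · rw [injective_iff_map_eq_zero]
    intro x hx
    obtain ⟨x, rfl⟩ := Submodule.mkQ_surjective _ x
    have hx' : mapBaseChange A B C x ∈ (J ^ k • ⊤ : Submodule C Ω[C⁄A]) :=
      (Submodule.Quotient.mk_eq_zero _).1 hx
    change P.mkQ x = 0
    rw [← hE]
    have hm := Submodule.mem_map_of_mem (f := E.liftKaehlerDifferential) hx'
    rw [Submodule.map_smul''] at hm
    have : (J ^ k • ⊤ : Submodule C ((C ⊗[B] Ω[B⁄A]) ⧸ P)) = ⊥ := by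
      rw [← P.range_mkQ, LinearMap.range_eq_map, ← Submodule.map_smul'', Submodule.mkQ_map_self]
    have hm2 := Submodule.smul_mono (le_refl (J ^ k)) le_top hm
    rw [this] at hm2
    exact hm2
  · intro y
    obtain ⟨y, rfl⟩ := Submodule.mkQ_surjective _ y
    have hy : y ∈ Submodule.span C (Set.range (D A C)) := by
      rw [span_range_derivation]; trivial
    suffices hh : ∃ x, mapBaseChange A B C x - y ∈ (J ^ k • ⊤ : Submodule C Ω[C⁄A]) by
      obtain ⟨x, hx⟩ := hh
      exact ⟨Submodule.mkQ _ x, (Submodule.Quotient.eq _).2 hx⟩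
    induction hy using Submodule.span_induction with
    | zero => exact ⟨0, by simp⟩
    | add x y _ _ hx hy =>
      obtain ⟨u, hu⟩ := hx
      obtain ⟨v, hv⟩ := hy
      exact ⟨u + v, by rw [map_add, add_sub_add_comm]; exact add_mem hu hv⟩
    | smul c x _ hx =>
      obtain ⟨u, hu⟩ := hx
      exact ⟨c • u, by rw [map_smul, ← smul_sub]; exact Submodule.smul_mem _ _ hu⟩
    | mem x hx =>
      obtain ⟨c, rfl⟩ := hx
      refine ⟨(1 : C) ⊗ₜ D A B (s c), ?_⟩
      rw [mapBaseChange_tmul, map_D, one_smul, ← neg_mem_iff, neg_sub, ← map_sub]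
      exact aux_deriv_mem (D A C) J k _ (hs c)

lemma aux_mem_iff {B : Type*} [CommRing B] (K : Ideal B) (hK : K.FG) (k : ℕ)
    (c : AdicCompletion K B) :
    c ∈ (K.map (algebraMap B (AdicCompletion K B))) ^ k ↔ AdicCompletion.eval K B k c = 0 := by
  rw [← LinearMap.mem_ker, ← AdicCompletion.pow_smul_top_eq_ker_eval hK, ← Ideal.map_pow,
    Ideal.smul_top_eq_map]
  rfl



/-- Let `A → B` be a homomorphism of commutative rings with `B` noetherian, `K ⊆ B` an ideal and
`C = Λ_K B` the `K`-adic completion, regarded as `A`-algebra via `A → B → C`. Then the canonical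
`C`-linear map `Ω_{B/A} ⊗_B C → Ω_{C/A}` becomes an isomorphism after applying the `(K·C)`-adic
completion functor. -/
theorem stmt5 (A B : Type) [CommRing A] [CommRing B] [Algebra A B]
    [IsNoetherianRing B] (K : Ideal B) :
    letI C := AdicCompletion K B
    letI : Algebra A C := ((algebraMap B C).comp (algebraMap A B)).toAlgebra
    letI : @IsScalarTower A B C Algebra.toSMul Algebra.toSMul Algebra.toSMul :=
      IsScalarTower.of_algebraMap_eq' rfl
    Function.Bijective
      (AdicCompletion.map (K.map (algebraMap B C))
        (KaehlerDifferential.mapBaseChange A B C)) := by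

  have hK : K.FG := IsNoetherian.noetherian K
  refine @aux_main A B (AdicCompletion K B) _ _ _ _ _
    ((algebraMap B (AdicCompletion K B)).comp (algebraMap A B)).toAlgebra
    (@IsScalarTower.of_algebraMap_eq' A B (AdicCompletion K B) _ _ _ _ _
      ((algebraMap B (AdicCompletion K B)).comp (algebraMap A B)).toAlgebra rfl) K ?_ ?_
  · intro k c
    obtain ⟨b, hb⟩ := Submodule.mkQ_surjective _ (AdicCompletion.eval K B k c)
    refine ⟨b, (aux_mem_iff K hK k _).2 ?_⟩
    rw [map_sub, sub_eq_zero, ← hb]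
    rfl
  · intro k b hb
    have h := (aux_mem_iff K hK k _).1 hb
    have h' : b ∈ (K ^ k • ⊤ : Ideal B) := (Submodule.Quotient.mk_eq_zero _).1 h
    simpa using h'
end

section
/- Let A → B be a formally smooth homomorphism of commutative rings and let B → C be a surjective ring homomorphism with kernel J. Then the sequence of C-modules 0 → H₁(L_{C/A}) → J/J² → C ⊗_B Ω_{B/A} → Ω_{C/A} → 0 is exact, where the map J/J² → C ⊗_B Ω_{B/A} sends the class of x ∈ J to 1 ⊗ d_{B/A}(x), and the map C ⊗_B Ω_{B/A} → Ω_{C/A} is the canonical one. -/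
/-- `B` as an extension of `C` over `A`. -/
noncomputable def stmt7Ext (A B C : Type) [CommRing A] [CommRing B] [CommRing C]
    [Algebra A B] [Algebra B C] [Algebra A C] [IsScalarTower A B C]
    (hsurj : Function.Surjective (algebraMap B C)) : Algebra.Extension.{0} A C where
  Ring := B
  σ x := (hsurj x).choose
  algebraMap_σ x := (hsurj x).choose_spec

/-- Let `A → B` be formally smooth and `B → C` surjective with kernel `J`. Then the sequence of
modules `0 → H₁(L_{C/A}) → J/J² → C ⊗_B Ω_{B/A} → Ω_{C/A} → 0` is exact, where
`J/J² → C ⊗_B Ω_{B/A}` sends the class of `x` to `1 ⊗ d x` (this is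
`KaehlerDifferential.kerCotangentToTensor`) and `C ⊗_B Ω_{B/A} → Ω_{C/A}` is the canonical map
(`KaehlerDifferential.mapBaseChange`). -/
theorem stmt7 {A B C : Type} [CommRing A] [CommRing B] [CommRing C]
    [Algebra A B] [Algebra B C] [Algebra A C] [IsScalarTower A B C]
    [Algebra.FormallySmooth A B]
    (hsurj : Function.Surjective (algebraMap B C)) :
    letI : Module B (Algebra.H1Cotangent A C) := Module.compHom _ (algebraMap B C)
    ∃ e : Algebra.H1Cotangent A C →ₗ[B] (RingHom.ker (algebraMap B C)).Cotangent,
      Function.Injective e ∧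
      Function.Exact e (KaehlerDifferential.kerCotangentToTensor A B C) ∧
      Function.Exact (KaehlerDifferential.kerCotangentToTensor A B C)
        (KaehlerDifferential.mapBaseChange A B C) ∧
      Function.Surjective (KaehlerDifferential.mapBaseChange A B C) := by
  let inst : Module B (Algebra.H1Cotangent A C) := Module.compHom _ (algebraMap B C)
  let P := stmt7Ext A B C hsurj
  have : Algebra.FormallySmooth A P.Ring := ‹Algebra.FormallySmooth A B›
  let f : Algebra.H1Cotangent A C ≃ₗ[C] P.H1Cotangent :=
    P.equivH1CotangentOfFormallySmooth.symm
  let e : Algebra.H1Cotangent A C →ₗ[B] (RingHom.ker (algebraMap B C)).Cotangent :=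
    { toFun := fun x => (f x).1.val
      map_add' := fun x y => by
        rw [map_add]; rfl
      map_smul' := fun b x => by
        have h1 : f (b • x) = (algebraMap B C b) • f x := f.map_smul (algebraMap B C b) x
        refine (congrArg (fun z : P.H1Cotangent => z.1.val) h1).trans ?_
        exact Algebra.Extension.Cotangent.val_smul' (P := P) b (f x).1 }
  refine ⟨e, ?_, ?_, KaehlerDifferential.exact_kerCotangentToTensor_mapBaseChange A B C hsurj,
    KaehlerDifferential.mapBaseChange_surjective A B C hsurj⟩
  · intro x y h
    exact f.injective (Subtype.ext h)
  · intro y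
    constructor
    · intro hy
      exact ⟨f.symm ⟨y, hy⟩, congrArg Subtype.val (f.apply_symm_apply ⟨y, hy⟩)⟩
    · rintro ⟨x, rfl⟩
      exact (f x).2
end

section
/- Let A → B be a formally smooth homomorphism of Noetherian commutative rings, let x₁, …, x_r ∈ B be a regular sequence generating an ideal J ⊆ B, and set C = B/J. Then: (1) the conormal module J/J² is a free C-module of rank r with basis the residue classes of x₁, …, x_r; and (2) the first André–Quillen homology H₁(L_{C/A}) is isomorphic, as a C-module, to the kernel of the map J/J² → C ⊗_B Ω_{B/A} sending the class of x ∈ J to 1 ⊗ d_{B/A}(x). -/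
lemma aux1 {B : Type*} [CommRing B] : ∀ (n : ℕ) (x : Fin n → B)
    (_ : ∀ (i : Fin n) (a : B), a * x i ∈ Ideal.span (x '' {j | j < i}) →
      a ∈ Ideal.span (x '' {j | j < i}))
    (c : Fin n → B) (_ : ∑ i, c i * x i = 0) (i : Fin n), c i ∈ Ideal.span (Set.range x)
  | 0, _, _, _, _, i => i.elim0
  | n + 1, x, h, c, hc, i => by
    have him : ∀ i : Fin n, x '' {j | j < i.castSucc} =
        (fun j : Fin n => x j.castSucc) '' {j | j < i} := by
      intro i
      ext b
      constructor
      · rintro ⟨j, hj, rfl⟩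
        have hj' : j < i.castSucc := hj
        obtain ⟨k, rfl⟩ := Fin.exists_castSucc_eq.mpr (ne_of_lt (hj'.trans_le (Fin.le_last _)))
        exact ⟨k, by simpa using hj', rfl⟩
      · rintro ⟨j, hj, rfl⟩
        exact ⟨j.castSucc, by simpa using hj, rfl⟩
    have hlast : x '' {j | j < Fin.last n} = Set.range (fun j : Fin n => x j.castSucc) := by
      ext b
      constructor
      · rintro ⟨j, hj, rfl⟩
        have hj' : j < Fin.last n := hj
        obtain ⟨k, rfl⟩ := Fin.exists_castSucc_eq.mpr (ne_of_lt hj')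
        exact ⟨k, rfl⟩
      · rintro ⟨j, rfl⟩
        exact ⟨j.castSucc, Fin.castSucc_lt_last j, rfl⟩
    have hle : Ideal.span (Set.range (fun j : Fin n => x j.castSucc)) ≤
        Ideal.span (Set.range x) := Ideal.span_mono (by rintro _ ⟨j, rfl⟩; exact ⟨_, rfl⟩)
    rw [Fin.sum_univ_castSucc] at hc
    have hl : c (Fin.last n) ∈ Ideal.span (Set.range (fun j : Fin n => x j.castSucc)) := by
      rw [← hlast]
      apply h
      rw [hlast, eq_neg_of_add_eq_zero_right hc]
      exact neg_mem (Ideal.sum_mem _ fun j _ =>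
        Ideal.mul_mem_left _ _ (Ideal.subset_span ⟨j, rfl⟩))
    obtain ⟨d, hd⟩ := (Ideal.mem_span_range_iff_exists_fun).mp hl
    have key := aux1 n (fun j => x j.castSucc) (fun i a => by
      have := h i.castSucc a
      rwa [him] at this) (fun j => c j.castSucc + d j * x (Fin.last n)) (by
        rw [← hd, Finset.sum_mul, ← Finset.sum_add_distrib] at hc
        rw [← hc]
        exact Finset.sum_congr rfl fun j _ => by ring)
    induction i using Fin.lastCases with
    | last => exact hle hl
    | cast i =>
      have h1 := hle (key i)
      have h2 : d i * x (Fin.last n) ∈ Ideal.span (Set.range x) :=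
        Ideal.mul_mem_left _ _ (Ideal.subset_span ⟨_, rfl⟩)
      simpa using sub_mem h1 h2

lemma ofList_eq_range {B : Type*} [CommRing B] (xs : List B) :
    Ideal.ofList xs = Ideal.span (Set.range fun i : Fin xs.length => xs[i]) := by
  unfold Ideal.ofList
  congr 1
  ext b
  simp [List.mem_iff_get]

lemma aux2 {B : Type*} [CommRing B] (xs : List B)
    (hreg : RingTheory.Sequence.IsWeaklyRegular B xs)
    (c : Fin xs.length → B) (hc : ∑ i, c i * xs[i] = 0) (i) : c i ∈ Ideal.ofList xs := by
  rw [ofList_eq_range]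
  refine aux1 _ _ ?_ c hc i
  intro i a ha
  have h := hreg.regular_mod_prev i i.2
  have e : Ideal.span ((fun i : Fin xs.length => xs[i]) '' {j | j < i}) =
      (Ideal.ofList (xs.take i) • ⊤ : Ideal B) := by
    rw [smul_eq_mul, Ideal.mul_top]
    unfold Ideal.ofList
    congr 1
    ext b
    simp only [Set.mem_image, Set.mem_ofPred_eq, List.mem_take_iff_getElem]
    constructor
    · rintro ⟨j, hj, rfl⟩
      exact ⟨j, by simp; exact hj, rfl⟩
    · rintro ⟨j, hj, rfl⟩
      exact ⟨⟨j, by omega⟩, by simp [Fin.lt_def]; omega, rfl⟩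
  rw [e] at ha ⊢
  rw [isSMulRegular_iff_right_eq_zero_of_smul] at h
  rw [← Submodule.Quotient.mk_eq_zero] at ha ⊢
  apply h
  rw [mul_comm] at ha
  exact ha

lemma part1 {B : Type*} [CommRing B] (xs : List B)
    (hreg : RingTheory.Sequence.IsWeaklyRegular B xs) :
    ∃ b : Module.Basis (Fin xs.length) (B ⧸ Ideal.ofList xs) (Ideal.ofList xs).Cotangent,
        ∀ i : Fin xs.length,
          b i = (Ideal.ofList xs).toCotangent
            ⟨xs[i], Ideal.subset_span (List.getElem_mem i.isLt)⟩ := by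
  set v : Fin xs.length → (Ideal.ofList xs).Cotangent := fun i =>
    (Ideal.ofList xs).toCotangent ⟨xs[i], Ideal.subset_span (List.getElem_mem i.isLt)⟩ with hv
  have hli : LinearIndependent (B ⧸ Ideal.ofList xs) v := by
    rw [Fintype.linearIndependent_iff]
    intro g hg i
    choose c hc using fun i => Ideal.Quotient.mk_surjective (g i)
    have h1 : ∑ i, c i • v i = 0 := by
      rw [← hg]
      refine Finset.sum_congr rfl fun j _ => ?_
      rw [← hc]
      rfl
    have h2 : (Ideal.ofList xs).toCotangent (∑ i, c i •
        ⟨xs[i], Ideal.subset_span (List.getElem_mem i.isLt)⟩) = 0 := by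
      rw [map_sum, ← h1]
      exact Finset.sum_congr rfl fun j _ => map_smul _ _ _
    rw [Ideal.toCotangent_eq_zero] at h2
    have h3 : ∑ i, c i * xs[i] ∈ Ideal.ofList xs • Ideal.ofList xs := by
      rw [smul_eq_mul, ← pow_two]
      simpa using h2
    have h4 : ∃ d : Fin xs.length → B, (∀ i, d i ∈ Ideal.ofList xs) ∧
        ∑ i, d i * xs[i] = ∑ i, c i * xs[i] := by
      have h3' : ∑ i, c i * xs[i] ∈ Ideal.ofList xs • Submodule.span B
          (Set.range fun i : Fin xs.length => xs[i]) := by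
        have e := ofList_eq_range xs
        unfold Ideal.span at e
        rwa [← e]
      obtain ⟨d, hd, hd'⟩ := (Submodule.mem_ideal_smul_span_iff_exists_sum _ _ _).mp h3'
      refine ⟨d, hd, ?_⟩
      rw [← hd', Finsupp.sum_fintype _ _ (by simp)]
      simp
    obtain ⟨d, hd, hd'⟩ := h4
    have h5 := aux2 xs hreg (fun i => c i - d i) (by
      simp only [sub_mul, Finset.sum_sub_distrib]; rw [hd', sub_self]) i
    rw [← hc, Ideal.Quotient.eq_zero_iff_mem]
    simpa using add_mem h5 (hd i)
  have hsp : ⊤ ≤ Submodule.span (B ⧸ Ideal.ofList xs) (Set.range v) := by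
    rintro y -
    obtain ⟨⟨y, hy⟩, rfl⟩ := Ideal.toCotangent_surjective _ y
    have hy' := hy
    rw [ofList_eq_range, Ideal.mem_span_range_iff_exists_fun] at hy'
    obtain ⟨c, rfl⟩ := hy'
    have : (Ideal.ofList xs).toCotangent ⟨_, hy⟩ = ∑ i, Ideal.Quotient.mk (Ideal.ofList xs) (c i) • v i := by
      trans ∑ i, c i • v i
      · simp only [hv, ← map_smul, ← map_sum]
        congr 1
        ext
        simp
      · rfl
    rw [this]
    exact Submodule.sum_mem _ fun i _ => Submodule.smul_mem _ _ (Submodule.subset_span ⟨i, rfl⟩)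
  exact ⟨.mk hli hsp, fun i => by simp [hv]⟩

open Algebra in
lemma part2 {A B : Type} [CommRing A] [CommRing B] [Algebra A B]
    [Algebra.FormallySmooth A B] (J : Ideal B) :
    letI : Module B (Algebra.H1Cotangent A (B ⧸ J)) :=
      Module.compHom _ (algebraMap B (B ⧸ J))
    Nonempty (Algebra.H1Cotangent A (B ⧸ J) ≃ₗ[B]
        LinearMap.ker (KaehlerDifferential.kerCotangentToTensor A B (B ⧸ J))) := by
  letI : Module B (Algebra.H1Cotangent A (B ⧸ J)) :=
      Module.compHom _ (algebraMap B (B ⧸ J))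
  let P : Extension A (B ⧸ J) := 
    { Ring := B
      σ := Function.surjInv Ideal.Quotient.mk_surjective
      algebraMap_σ := Function.surjInv_eq _ }
  haveI : FormallySmooth A P.Ring := inferInstanceAs (FormallySmooth A B)
  let e := P.equivH1CotangentOfFormallySmooth
  refine ⟨LinearEquiv.symm (LinearEquiv.mk (M := LinearMap.ker (KaehlerDifferential.kerCotangentToTensor A B (B ⧸ J))) (M₂ := Algebra.H1Cotangent A (B ⧸ J)) (σ := RingHom.id B)
    ⟨⟨fun x => e ⟨Extension.Cotangent.of (P := P) x.1, x.2⟩, fun x y => ?_⟩, fun b x => ?_⟩ (fun y => ⟨Extension.Cotangent.val (e.symm y).1, (e.symm y).2⟩) ?_ ?_)⟩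
  · exact e.map_add ⟨Extension.Cotangent.of (P := P) x.1, x.2⟩ ⟨Extension.Cotangent.of (P := P) y.1, y.2⟩
  · refine Eq.trans ?_ (e.map_smul (algebraMap B (B ⧸ J) b) ⟨Extension.Cotangent.of (P := P) x.1, x.2⟩)
    apply congrArg e
    apply Subtype.ext
    exact (Extension.Cotangent.val_smul' (P := P) b (Extension.Cotangent.of (P := P) x.1)).symm
  · intro x
    apply Subtype.ext
    exact congrArg (fun z => Extension.Cotangent.val z.1) (e.symm_apply_apply ⟨Extension.Cotangent.of (P := P) x.1, x.2⟩)
  · intro y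
    exact e.apply_symm_apply y


/-- Let `A → B` be a formally smooth homomorphism of noetherian commutative rings, let
`x₁, …, x_r ∈ B` be a regular sequence generating an ideal `J`, and `C = B ⧸ J`. Then:
(1) the conormal module `J/J²` is a free `C`-module of rank `r` with basis the residue classes
of the `xᵢ`; and (2) `H₁(L_{C/A})` is isomorphic to the kernel of the map
`J/J² → C ⊗_B Ω_{B/A}` sending the class of `x` to `1 ⊗ d x`
(`KaehlerDifferential.kerCotangentToTensor`). -/
theorem stmt8 {A B : Type} [CommRing A] [CommRing B] [Algebra A B]
    [IsNoetherianRing A] [IsNoetherianRing B] [Algebra.FormallySmooth A B]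
    (xs : List B) (hreg : RingTheory.Sequence.IsRegular B xs) :
    letI J : Ideal B := Ideal.ofList xs
    letI : Module B (Algebra.H1Cotangent A (B ⧸ J)) :=
      Module.compHom _ (algebraMap B (B ⧸ J))
    (∃ b : Module.Basis (Fin xs.length) (B ⧸ J) (Ideal.ofList xs).Cotangent,
        ∀ i : Fin xs.length,
          b i = (Ideal.ofList xs).toCotangent
            ⟨xs[i], Ideal.subset_span (List.getElem_mem i.isLt)⟩) ∧
      Nonempty (Algebra.H1Cotangent A (B ⧸ J) ≃ₗ[B]
        LinearMap.ker (KaehlerDifferential.kerCotangentToTensor A B (B ⧸ J))) := by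
  exact ⟨part1 xs hreg.toIsWeaklyRegular, part2 _⟩
end

section
/- Let A be a Noetherian commutative ring and I ⊆ A an ideal. Let M be an arbitrary A-module with I-adic completion Λ_I M, and let N be an A-module which is I-adically complete (complete and separated). Then precomposition with the canonical map M → Λ_I M defines a bijection Hom_A(Λ_I M, N) → Hom_A(M, N). -/
/-- Let `A` be a noetherian commutative ring, `I ⊆ A` an ideal, `M` an arbitrary `A`-module and
`N` an `I`-adically complete `A`-module. Then precomposition with the canonical map
`M → Λ_I M` is a bijection `Hom_A(Λ_I M, N) → Hom_A(M, N)`. -/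
theorem stmt9 {A : Type} [CommRing A] [IsNoetherianRing A] (I : Ideal A)
    (M N : Type) [AddCommGroup M] [Module A M] [AddCommGroup N] [Module A N]
    [IsAdicComplete I N] :
    Function.Bijective
      (fun f : AdicCompletion I M →ₗ[A] N => f ∘ₗ AdicCompletion.of I M) := by
  constructor
  · intro f g hfg
    have hfg' : ∀ m, f (AdicCompletion.of I M m) = g (AdicCompletion.of I M m) :=
      fun m => LinearMap.congr_fun hfg m
    refine LinearMap.ext fun x => ?_
    rw [← sub_eq_zero]
    apply IsHausdorff.haus (inferInstance : IsHausdorff I N)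
    intro n
    rw [SModEq.zero]
    obtain ⟨m, hm⟩ := Submodule.mkQ_surjective _ (AdicCompletion.eval I M n x)
    have hy : x - AdicCompletion.of I M m ∈
        (I ^ n • ⊤ : Submodule A (AdicCompletion I M)) := by
      rw [AdicCompletion.pow_smul_top_eq_ker_eval (IsNoetherian.noetherian I),
        LinearMap.mem_ker, map_sub, AdicCompletion.eval_of, hm, sub_self]
    have h2 : f x - g x = (f - g) (x - AdicCompletion.of I M m) := by
      simp [hfg']
    rw [h2]
    have h3 := Submodule.mem_map_of_mem (f := f - g) hy
    rw [Submodule.map_smul''] at h3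
    exact Submodule.smul_mono le_rfl le_top h3
  · intro f
    refine ⟨(AdicCompletion.ofLinearEquiv I N).symm.toLinearMap ∘ₗ
      (AdicCompletion.map I f).restrictScalars A, ?_⟩
    ext m
    simp [AdicCompletion.map_of]
end

section
/- Let A be a Noetherian commutative ring which is complete and separated for the I-adic topology of an ideal I ⊆ A. Let B = A[[Y₁, …, Y_m]] be the formal power series ring in m variables over A, and let J ⊆ B be the ideal generated by the image of I together with Y₁, …, Y_m. Then the J-adic completion of the module of Kähler differentials Ω_{B/A} is a free B-module of rank m, with basis given by the images of d_{B/A}(Y₁), …, d_{B/A}(Y_m). -/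
open MvPowerSeries in
lemma aux_mem_pow {A : Type} [CommRing A] {m : ℕ} (n : ℕ) :
    ∀ f : MvPowerSeries (Fin m) A, (∀ α : Fin m →₀ ℕ, α.degree < n → coeff α f = 0) →
      f ∈ Ideal.span (Set.range (X (σ := Fin m) (R := A))) ^ n := by
  classical
  induction n with
  | zero => intro f _; simp
  | succ n ih =>
    intro f hf
    have hs : ∀ α : Fin m →₀ ℕ, α ≠ 0 → ∃ i, α i ≠ 0 := by
      intro α h
      by_contra! h'
      exact h (Finsupp.ext h')
    rcases isEmpty_or_nonempty (Fin m) with hE | hE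
    · have : f = 0 := by
        ext α
        rw [Subsingleton.elim α 0]
        exact hf 0 (by simp)
      rw [this]; exact zero_mem _
    choose! s hs using hs
    let g : Fin m → MvPowerSeries (Fin m) A := fun i β =>
      if s (β + Finsupp.single i 1) = i then coeff (β + Finsupp.single i 1) f else 0
    have hg : ∀ i β, coeff β (g i) =
      if s (β + Finsupp.single i 1) = i then coeff (β + Finsupp.single i 1) f else 0 :=
      fun i β => rfl
    have hfg : f = ∑ i, X i * g i := by
      ext α
      rw [map_sum]
      have h1 : ∀ i, coeff α (X i * g i) =
          if α i ≠ 0 ∧ s α = i then coeff α f else 0 := by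
        intro i
        rw [X, coeff_monomial_mul]
        by_cases hi : α i = 0
        · rw [if_neg, if_neg]
          · simp [hi]
          · intro h
            have := h i
            simp [hi] at this
        · have hle : Finsupp.single i 1 ≤ α := by
            rw [Finsupp.single_le_iff]; omega
          rw [if_pos hle, hg, tsub_add_cancel_of_le hle]
          simp [hi]
      simp_rw [h1]
      by_cases h0 : α = 0
      · subst h0
        simp
        simpa using hf 0 (by simp)
      · rw [Finset.sum_eq_single (s α)]
        · simp [hs α h0]
        · intro b _ hb
          rw [if_neg]
          exact fun h => hb h.2.symm
        · simp
    rw [hfg, pow_succ']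
    refine Ideal.sum_mem _ fun i _ => Ideal.mul_mem_mul (Ideal.subset_span ⟨i, rfl⟩) (ih _ ?_)
    intro α hα
    rw [hg]
    split_ifs
    · exact hf _ (by rw [map_add, Finsupp.degree_single]; omega)
    · rfl

open MvPowerSeries in
lemma aux_J_pow {A : Type} [CommRing A] (I : Ideal A) {m : ℕ} (n : ℕ)
    (f : MvPowerSeries (Fin m) A) :
    f ∈ (I.map (algebraMap A (MvPowerSeries (Fin m) A)) ⊔
      Ideal.span (Set.range (X (σ := Fin m) (R := A)))) ^ n ↔
    ∀ α : Fin m →₀ ℕ, coeff α f ∈ I ^ (n - α.degree) := by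
  classical
  set K : Ideal (MvPowerSeries (Fin m) A) :=
    Ideal.span (Set.range (X (σ := Fin m) (R := A))) with hK
  set J := I.map (algebraMap A (MvPowerSeries (Fin m) A)) ⊔ K with hJ
  let F : ℕ → Ideal (MvPowerSeries (Fin m) A) := fun n =>
    { carrier := {f | ∀ α : Fin m →₀ ℕ, coeff α f ∈ I ^ (n - α.degree)}
      add_mem' := fun {a b} ha hb α => by
        rw [map_add]; exact add_mem (ha α) (hb α)
      zero_mem' := fun α => by simp
      smul_mem' := fun c x hx α => by
        rw [smul_eq_mul, coeff_mul]
        refine Ideal.sum_mem _ fun p hp => Ideal.mul_mem_left _ _ ?_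
        refine Ideal.pow_le_pow_right ?_ (hx p.2)
        have := Finset.HasAntidiagonal.mem_antidiagonal.1 hp
        rw [← this, map_add]; omega }
  have hF : ∀ n f, f ∈ F n ↔ ∀ α : Fin m →₀ ℕ, coeff α f ∈ I ^ (n - α.degree) :=
    fun _ _ => Iff.rfl
  have hmul : ∀ a b, F a * F b ≤ F (a + b) := by
    intro a b
    rw [Ideal.mul_le]
    intro x hx y hy α
    rw [coeff_mul]
    refine Ideal.sum_mem _ fun p hp => ?_
    have h1 := Ideal.mul_mem_mul (hx p.1) (hy p.2)
    rw [← pow_add] at h1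
    refine Ideal.pow_le_pow_right ?_ h1
    have := Finset.HasAntidiagonal.mem_antidiagonal.1 hp
    rw [← this, map_add]; omega
  have hJ1 : J ≤ F 1 := by
    rw [hJ]
    refine sup_le ?_ ?_
    · rw [Ideal.map_le_iff_le_comap]
      intro a ha α
      change coeff α (C a) ∈ _
      rw [coeff_C]
      split_ifs with h
      · subst h; simpa using ha
      · simp
    · rw [hK, Ideal.span_le]
      rintro _ ⟨i, rfl⟩ α
      rw [coeff_X]
      split_ifs with h
      · subst h; simp
      · simp
  have hle : ∀ n, J ^ n ≤ F n := by
    intro n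
    induction n with
    | zero => intro f _ α; simp
    | succ n ih =>
      rw [pow_succ]
      exact (Ideal.mul_mono ih hJ1).trans (hmul n 1)
  have hIJ : I.map (algebraMap A (MvPowerSeries (Fin m) A)) ≤ J := le_sup_left
  have hKJ : K ≤ J := le_sup_right
  refine ⟨fun h => hle n h, fun h => ?_⟩
  have hsplit : f = (truncTotal n f : MvPolynomial (Fin m) A) +
      (f - (truncTotal n f : MvPolynomial (Fin m) A)) := by ring
  rw [hsplit]
  refine add_mem ?_ ?_
  · rw [MvPolynomial.as_sum (truncTotal n f)]
    have : ∀ (s : Finset (Fin m →₀ ℕ)) (c : (Fin m →₀ ℕ) → MvPolynomial (Fin m) A),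
        ((∑ i ∈ s, c i : MvPolynomial (Fin m) A) : MvPowerSeries (Fin m) A) =
          ∑ i ∈ s, (c i : MvPowerSeries (Fin m) A) := fun s c =>
      map_sum (MvPolynomial.coeToMvPowerSeries.ringHom) c s
    rw [this]
    refine Ideal.sum_mem _ fun α hα => ?_
    rw [MvPolynomial.coe_monomial]
    have hd : α.degree < n := by
      by_contra hc
      rw [MvPolynomial.mem_support_iff] at hα
      exact hα (coeff_truncTotal_eq_zero _ (by omega))
    rw [coeff_truncTotal _ hd]
    have e1 : monomial α (coeff α f) = algebraMap A (MvPowerSeries (Fin m) A) (coeff α f) *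
        monomial α (1 : A) := by
      rw [← Algebra.smul_def]; simp [← map_smul]
    rw [e1, show n = (n - α.degree) + α.degree by omega, pow_add]
    refine Ideal.mul_mem_mul ?_ ?_
    · refine Ideal.pow_right_mono hIJ _ ?_
      rw [← Ideal.map_pow]
      exact Ideal.mem_map_of_mem _ (by simpa using h α)
    · refine Ideal.pow_right_mono hKJ _ (aux_mem_pow _ _ ?_)
      intro β hβ
      rw [coeff_monomial, if_neg]
      rintro rfl
      exact lt_irrefl _ hβ
  · refine Ideal.pow_right_mono hKJ _ (aux_mem_pow _ _ ?_)
    intro α hα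
    rw [map_sub, MvPolynomial.coeff_coe, coeff_truncTotal _ hα, sub_self]

open MvPowerSeries in
lemma aux_complete {A : Type} [CommRing A] (I : Ideal A) [IsAdicComplete I A] {m : ℕ} :
    IsAdicComplete (I.map (algebraMap A (MvPowerSeries (Fin m) A)) ⊔
      Ideal.span (Set.range (X (σ := Fin m) (R := A)))) (MvPowerSeries (Fin m) A) := by
  set J := (I.map (algebraMap A (MvPowerSeries (Fin m) A)) ⊔
      Ideal.span (Set.range (X (σ := Fin m) (R := A)))) with hJ
  have key : ∀ n (f g : MvPowerSeries (Fin m) A),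
      f ≡ g [SMOD (J ^ n • ⊤ : Ideal (MvPowerSeries (Fin m) A))] ↔
      ∀ α : Fin m →₀ ℕ, coeff α f - coeff α g ∈ I ^ (n - α.degree) := by
    intro n f g
    rw [SModEq.sub_mem, smul_eq_mul, Ideal.mul_top, hJ, aux_J_pow]
    simp only [map_sub]
  have hA : ∀ n (f g : A), f ≡ g [SMOD (I ^ n • ⊤ : Ideal A)] ↔ f - g ∈ I ^ n := by
    intro n f g
    rw [SModEq.sub_mem, smul_eq_mul, Ideal.mul_top]
  refine { haus' := ?_, prec' := ?_ }
  · intro x hx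
    ext α
    refine IsHausdorff.haus (I := I) inferInstance _ fun n => ?_
    rw [hA]
    have := (key _ _ _).1 (hx (n + α.degree)) α
    simpa using this
  · intro f hf
    have : ∀ α : Fin m →₀ ℕ, ∃ L : A, ∀ n, coeff α (f (n + α.degree)) ≡ L
        [SMOD (I ^ n • ⊤ : Ideal A)] := by
      intro α
      refine IsPrecomplete.prec (I := I) inferInstance fun {a b} hab => ?_
      rw [hA]
      have := (key _ _ _).1 (hf (Nat.add_le_add_right hab α.degree)) α
      simpa using this
    choose L hL using this
    refine ⟨(fun α => L α : MvPowerSeries (Fin m) A), fun n => ?_⟩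
    refine (key _ _ _).2 ?_
    intro α
    change coeff α (f n) - L α ∈ _
    by_cases h : α.degree ≤ n
    · have := (hA _ _ _).1 (hL α (n - α.degree))
      rwa [Nat.sub_add_cancel h] at this
    · rw [Nat.sub_eq_zero_of_le (by omega)]; simp

lemma aux_D_pow {A B : Type} [CommRing A] [CommRing B] [Algebra A B] (J : Ideal B) (n : ℕ) :
    ∀ r ∈ J ^ (n + 1), KaehlerDifferential.D A B r ∈
      (J ^ n • ⊤ : Submodule B (KaehlerDifferential A B)) := by
  induction n with
  | zero => intro r _; simp
  | succ n ih =>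
    intro r hr
    rw [pow_succ] at hr
    refine Submodule.mul_induction_on hr ?_ ?_
    · intro x hx y hy
      rw [Derivation.leibniz]
      refine add_mem (Submodule.smul_mem_smul hx trivial) ?_
      rw [pow_succ', mul_smul]
      exact Submodule.smul_mem_smul hy (ih x hx)
    · intro x y hx hy
      rw [map_add]; exact add_mem hx hy

open MvPowerSeries in
lemma aux_key {A : Type} [CommRing A] {m : ℕ} (n : ℕ)
    (w : KaehlerDifferential A (MvPowerSeries (Fin m) A)) :
    w - ∑ i, (pderiv A i).liftKaehlerDifferential w •
      KaehlerDifferential.D A (MvPowerSeries (Fin m) A) (X i) ∈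
    (Ideal.span (Set.range (X (σ := Fin m) (R := A))) ^ n • ⊤ :
      Submodule (MvPowerSeries (Fin m) A) (KaehlerDifferential A (MvPowerSeries (Fin m) A))) := by
  classical
  set K : Ideal (MvPowerSeries (Fin m) A) :=
    Ideal.span (Set.range (X (σ := Fin m) (R := A))) with hK
  let D := KaehlerDifferential.D A (MvPowerSeries (Fin m) A)
  let T : KaehlerDifferential A (MvPowerSeries (Fin m) A) →ₗ[MvPowerSeries (Fin m) A]
      KaehlerDifferential A (MvPowerSeries (Fin m) A) :=
    LinearMap.id - ∑ i, ((pderiv A i).liftKaehlerDifferential).smulRight (D (X i))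
  have hT : ∀ w, T w = w - ∑ i, (pderiv A i).liftKaehlerDifferential w • D (X i) := by
    intro w; simp [T]
  change w - ∑ i, (pderiv A i).liftKaehlerDifferential w • D (X i) ∈ _
  rw [← hT, ← Submodule.mem_comap]
  have hw : w ∈ Submodule.span (MvPowerSeries (Fin m) A) (Set.range D) := by
    rw [KaehlerDifferential.span_range_derivation]; trivial
  refine (Submodule.span_le.2 ?_) hw
  rintro _ ⟨f, rfl⟩
  rw [SetLike.mem_coe, Submodule.mem_comap]
  have hX : ∀ j, T (D (X j)) = 0 := by
    intro j
    rw [hT, Finset.sum_eq_single j]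
    · simp [D]
    · intro i _ hij
      simp [D, pderiv_X_of_ne hij.symm]
    · simp
  have hp : ∀ p : MvPolynomial (Fin m) A, T (D (p : MvPowerSeries (Fin m) A)) = 0 := by
    intro p
    induction p using MvPolynomial.induction_on with
    | C a =>
      rw [MvPolynomial.coe_C]
      have : D (C a) = 0 := D.map_algebraMap a
      rw [this, map_zero]
    | add p q hp hq => rw [MvPolynomial.coe_add, map_add, map_add, hp, hq, add_zero]
    | mul_X p i hp =>
      rw [MvPolynomial.coe_mul, MvPolynomial.coe_X, Derivation.leibniz, map_add, map_smul,
        map_smul, hp, hX]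
      simp
  have hsplit : f = (truncTotal (n + 1) f : MvPolynomial (Fin m) A) +
      (f - (truncTotal (n + 1) f : MvPolynomial (Fin m) A)) := by ring
  rw [hsplit, map_add, map_add, hp, zero_add]
  have h1 := aux_D_pow (A := A) K n (f - (truncTotal (n + 1) f : MvPolynomial (Fin m) A))
    (aux_mem_pow _ _ (by
      intro α hα
      rw [map_sub, MvPolynomial.coeff_coe, coeff_truncTotal _ hα, sub_self]))
  have h2 := Submodule.mem_map_of_mem (f := T) h1
  rw [Submodule.map_smul''] at h2
  exact Submodule.smul_mono le_rfl le_top h2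

open MvPowerSeries in
lemma aux_main_s10 {A B : Type} [CommRing A] [CommRing B] [Algebra A B] (J : Ideal B)
    [IsAdicComplete J B] {m : ℕ} (x : Fin m → B)
    (ψ : Fin m → (KaehlerDifferential A B →ₗ[B] B))
    (h1 : ∀ i j, ψ i (KaehlerDifferential.D A B (x j)) = if i = j then 1 else 0)
    (h2 : ∀ n w, w - ∑ i, ψ i w • KaehlerDifferential.D A B (x i) ∈
      (J ^ n • ⊤ : Submodule B (KaehlerDifferential A B))) :
    ∃ b : Module.Basis (Fin m) B (AdicCompletion J (KaehlerDifferential A B)),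
      ∀ i : Fin m, b i = AdicCompletion.of J (KaehlerDifferential A B)
          (KaehlerDifferential.D A B (x i)) := by
  classical
  let D := KaehlerDifferential.D A B
  let φ : (Fin m → B) →ₗ[B] KaehlerDifferential A B :=
    Fintype.linearCombination B (fun i => D (x i))
  have hφ : ∀ y, φ y = ∑ i, y i • D (x i) := fun y => Fintype.linearCombination_apply ..
  have hψφ : ∀ i y, ψ i (φ y) = y i := by
    intro i y
    rw [hφ, map_sum]
    simp [D, h1]
  have hψ : ∀ i n w, w ∈ (J ^ n • ⊤ : Submodule B (KaehlerDifferential A B)) →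
      ψ i w ∈ (J ^ n • ⊤ : Ideal B) := by
    intro i n w hw
    have h2 := Submodule.mem_map_of_mem (f := ψ i) hw
    rw [Submodule.map_smul''] at h2
    exact Submodule.smul_mono le_rfl le_top h2
  let Φ := (AdicCompletion.of J (KaehlerDifferential A B)).comp φ
  have hinj : Function.Injective Φ := by
    rw [injective_iff_map_eq_zero]
    intro y hy
    ext i
    refine IsHausdorff.haus (I := J) inferInstance _ fun n => ?_
    rw [SModEq.zero, ← hψφ i y]
    apply hψ
    have := congrArg (fun z => z.val n) hy
    simpa [Φ] using this
  have hsurj : Function.Surjective Φ := by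
    intro ω
    have hw : ∀ n, ∃ w, Submodule.Quotient.mk (p := (J ^ n • ⊤ : Submodule B _)) w = ω.val n :=
      fun n => Submodule.Quotient.mk_surjective _ _
    choose w hw using hw
    have hL : ∀ i, ∃ L : B, ∀ n, ψ i (w n) ≡ L [SMOD (J ^ n • ⊤ : Ideal B)] := by
      intro i
      refine IsPrecomplete.prec (I := J) inferInstance fun {a b} hab => ?_
      rw [SModEq.sub_mem, ← map_sub]
      apply hψ
      rw [← Submodule.Quotient.eq, hw]
      have := ω.2 hab
      rw [← this, ← hw b]
      rfl
    choose L hL using hL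
    refine ⟨L, ?_⟩
    ext n
    rw [← hw n]
    change Submodule.Quotient.mk (φ L) = _
    rw [Submodule.Quotient.eq]
    have e : φ L - w n = -(w n - ∑ i, ψ i (w n) • D (x i)) -
        ∑ i, (ψ i (w n) - L i) • D (x i) := by
      simp only [sub_smul, Finset.sum_sub_distrib, hφ]
      abel
    rw [e]
    refine sub_mem (neg_mem (h2 n _)) (sum_mem fun i _ => Submodule.smul_mem_smul ?_ trivial)
    have := SModEq.sub_mem.1 (hL i n)
    rwa [smul_eq_mul, Ideal.mul_top] at this
  refine ⟨Module.Basis.ofEquivFun (LinearEquiv.ofBijective Φ ⟨hinj, hsurj⟩).symm, fun i => ?_⟩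
  rw [Module.Basis.coe_ofEquivFun, LinearEquiv.symm_symm]
  change AdicCompletion.of J _ (φ (Pi.single i 1)) = _
  congr 1
  rw [hφ, Finset.sum_eq_single i] <;> simp +contextual [D]


/-- Let `A` be a noetherian commutative ring, complete and separated for the `I`-adic topology.
Let `B = A[[Y₁, …, Y_m]]` and let `J ⊆ B` be the ideal generated by the image of `I` together
with the variables `Y₁, …, Y_m`. Then the `J`-adic completion of `Ω_{B/A}` is a free `B`-module
of rank `m`, with basis the images of `d Y₁, …, d Y_m`. -/
theorem stmt10 {A : Type} [CommRing A] [IsNoetherianRing A] (I : Ideal A)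
    [IsAdicComplete I A] (m : ℕ) :
    letI B := MvPowerSeries (Fin m) A
    letI J : Ideal B :=
      I.map (algebraMap A B) ⊔ Ideal.span (Set.range (MvPowerSeries.X (σ := Fin m) (R := A)))
    ∃ b : Module.Basis (Fin m) B (AdicCompletion J (KaehlerDifferential A B)),
      ∀ i : Fin m,
        b i = AdicCompletion.of J (KaehlerDifferential A B)
          (KaehlerDifferential.D A B (MvPowerSeries.X i)) := by
  classical
  haveI := aux_complete (m := m) I
  refine aux_main_s10 (A := A) _ MvPowerSeries.X
    (fun i => (MvPowerSeries.pderiv A i).liftKaehlerDifferential) ?_ ?_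
  · intro i j
    rw [Derivation.liftKaehlerDifferential_comp_D]
    split_ifs with h
    · subst h; exact MvPowerSeries.pderiv_X_self
    · exact MvPowerSeries.pderiv_X_of_ne (Ne.symm h)
  · intro n w
    exact Submodule.smul_mono_left (Ideal.pow_right_mono le_sup_right n) (aux_key n w)
end

section
/- Let A be a Noetherian commutative ring, I ⊆ A an ideal, and M a flat A-module. Then the I-adic completion Λ_I M is a flat A-module. -/
open TensorProduct in
theorem aux_AR {A : Type} [CommRing A] [IsNoetherianRing A] (I : Ideal A)
    (M : Type) [AddCommGroup M] [Module A M] [Module.Flat A M]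
    {F G : Type} [AddCommGroup F] [Module A F] [AddCommGroup G] [Module A G] [Module.Finite A G]
    (φ : F →ₗ[A] G) :
    ∃ c : ℕ, ∀ (k : ℕ) (x : M ⊗[A] F),
      φ.lTensor M x ∈ (I ^ (k + c) • ⊤ : Submodule A (M ⊗[A] G)) →
      ∃ z ∈ (I ^ k • ⊤ : Submodule A (M ⊗[A] F)), φ.lTensor M z = φ.lTensor M x := by
  obtain ⟨c, hc⟩ := Ideal.exists_pow_inf_eq_pow_smul I (LinearMap.range φ)
  refine ⟨c, fun k x hx => ?_⟩
  set Q : Submodule A G := I ^ (k + c) • ⊤ with hQ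
  have hker : ∀ p : F, φ p ∈ Q → ∃ z ∈ (I ^ k • ⊤ : Submodule A F), φ z = φ p := by
    intro p hp
    have h1 : φ p ∈ Q ⊓ LinearMap.range φ := ⟨hp, p, rfl⟩
    rw [hQ, hc _ (by omega), Nat.add_sub_cancel] at h1
    have h2 : φ p ∈ I ^ k • LinearMap.range φ := Submodule.smul_mono le_rfl inf_le_right h1
    rw [LinearMap.range_eq_map, ← Submodule.map_smul''] at h2
    exact h2
  have hzero : Q.mkQ.lTensor M (φ.lTensor M x) = 0 := by
    refine Submodule.smul_induction_on hx ?_ ?_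
    · intro r hr w _
      induction w using TensorProduct.induction_on with
      | zero => simp
      | tmul m g =>
        rw [← TensorProduct.tmul_smul, LinearMap.lTensor_tmul]
        have : Q.mkQ (r • g) = 0 := by
          rw [Submodule.mkQ_apply, Submodule.Quotient.mk_eq_zero]
          exact Submodule.smul_mem_smul hr trivial
        rw [this, TensorProduct.tmul_zero]
      | add a b ha hb => rw [smul_add, map_add, ha trivial, hb trivial, add_zero]
    · intro a b ha hb
      rw [map_add, ha, hb, add_zero]
  have hex := Module.Flat.lTensor_exact M
    (LinearMap.exact_subtype_ker_map (Q.mkQ ∘ₗ φ))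
  have hx0 : (Q.mkQ ∘ₗ φ).lTensor M x = 0 := by
    rw [LinearMap.lTensor_comp]; exact hzero
  obtain ⟨s, rfl⟩ := (hex x).1 hx0
  clear hx0 hzero hx
  induction s using TensorProduct.induction_on with
  | zero => exact ⟨0, zero_mem _, by simp⟩
  | tmul m p =>
    obtain ⟨z, hz, hzp⟩ := hker p (by
      have := p.2
      rw [LinearMap.mem_ker, LinearMap.comp_apply, Submodule.mkQ_apply,
        Submodule.Quotient.mk_eq_zero] at this
      exact this)
    refine ⟨m ⊗ₜ z, ?_, by simp [hzp]⟩
    have : (TensorProduct.mk A M F m) z ∈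
        Submodule.map (TensorProduct.mk A M F m) (I ^ k • ⊤) := ⟨z, hz, rfl⟩
    rw [Submodule.map_smul''] at this
    exact Submodule.smul_mono le_rfl le_top this
  | add a b ha hb =>
    obtain ⟨z, hz, h⟩ := ha
    obtain ⟨w, hw, h'⟩ := hb
    exact ⟨z + w, add_mem hz hw, by rw [map_add, h, h', map_add, map_add]⟩

theorem aux_exact {A : Type} [CommRing A] (I : Ideal A)
    {M N P : Type} [AddCommGroup M] [Module A M] [AddCommGroup N] [Module A N]
    [AddCommGroup P] [Module A P] (f : M →ₗ[A] N) (g : N →ₗ[A] P)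
    (hfg : Function.Exact f g)
    (hf : ∃ c : ℕ, ∀ (k : ℕ) (x : M), f x ∈ (I ^ (k + c) • ⊤ : Submodule A N) →
      ∃ z ∈ (I ^ k • ⊤ : Submodule A M), f z = f x)
    (hg : ∃ c : ℕ, ∀ (k : ℕ) (x : N), g x ∈ (I ^ (k + c) • ⊤ : Submodule A P) →
      ∃ z ∈ (I ^ k • ⊤ : Submodule A N), g z = g x)
    (x : AdicCompletion I N) (hx : AdicCompletion.map I g x = 0) :
    ∃ y, AdicCompletion.map I f y = x := by
  obtain ⟨c, hc⟩ := hf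
  obtain ⟨d, hd⟩ := hg
  obtain ⟨a, rfl⟩ := AdicCompletion.mk_surjective I N x
  have hga (n : ℕ) : g (a n) ∈ (I ^ n • ⊤ : Submodule A P) := by
    simpa using congrArg (fun x ↦ x.val n) hx
  choose b hb hgb using fun k => hd k (a (k + d)) (hga _)
  have : ∀ k, ∃ y, f y = a (k + d) - b k := fun k =>
    (hfg _).1 (by rw [map_sub, hgb, sub_self])
  choose y hy using this
  have mono : ∀ {m n : ℕ}, m ≤ n → (I ^ n • ⊤ : Submodule A N) ≤ I ^ m • ⊤ := fun h =>
    Submodule.smul_mono_left (Ideal.pow_le_pow_right h)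
  have haa : ∀ {m n : ℕ}, m ≤ n → a n - a m ∈ (I ^ m • ⊤ : Submodule A N) := fun h =>
    (Submodule.Quotient.eq _).1 (AdicCompletion.AdicCauchySequence.mk_eq_mk h a)
  let y' : AdicCompletion.AdicCauchySequence I (LinearMap.range f) :=
    AdicCompletion.AdicCauchySequence.mk I _ (fun k => f.rangeRestrict (y (k + c))) (by
      intro k
      rw [SModEq.sub_mem, ← map_sub]
      obtain ⟨z, hz, hfz⟩ := hc k (y (k + c) - y (k + 1 + c)) (by
        rw [map_sub, hy, hy]
        have e : a (k + c + d) - b (k + c) - (a (k + 1 + c + d) - b (k + 1 + c)) =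
          -(a (k + 1 + c + d) - a (k + c + d)) - b (k + c) + b (k + 1 + c) := by abel
        rw [e]
        refine add_mem (sub_mem (neg_mem ?_) (hb _)) (mono (by omega) (hb _))
        exact mono (by omega) (haa (by omega)))
      have e : f.rangeRestrict (y (k + c) - y (k + 1 + c)) = f.rangeRestrict z :=
        Subtype.ext hfz.symm
      rw [e]
      have : f.rangeRestrict z ∈ Submodule.map f.rangeRestrict (I ^ k • ⊤) := ⟨z, hz, rfl⟩
      rw [Submodule.map_smul''] at this
      exact Submodule.smul_mono le_rfl le_top this)
  obtain ⟨w, hw⟩ := AdicCompletion.map_surjective I (f := f.rangeRestrict)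
    f.surjective_rangeRestrict (AdicCompletion.mk I _ y')
  refine ⟨w, ?_⟩
  have e : f = (LinearMap.range f).subtype ∘ₗ f.rangeRestrict := rfl
  rw [e, ← AdicCompletion.map_comp_apply, hw]
  ext n
  change Submodule.Quotient.mk (f (y (n + c))) = Submodule.Quotient.mk (a n)
  rw [Submodule.Quotient.eq, hy]
  have e : a (n + c + d) - b (n + c) - a n = (a (n + c + d) - a n) - b (n + c) := by abel
  rw [e]
  exact sub_mem (haa (by omega)) (mono (by omega) (hb _))

theorem aux_map_sum {A : Type} [CommRing A] (I : Ideal A)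
    {M N : Type} [AddCommGroup M] [Module A M] [AddCommGroup N] [Module A N]
    {n : ℕ} (a : Fin n → A) (φ : Fin n → (M →ₗ[A] N)) (x : AdicCompletion I M) :
    AdicCompletion.map I (∑ j, a j • φ j) x = ∑ j, a j • AdicCompletion.map I (φ j) x := by
  obtain ⟨b, rfl⟩ := AdicCompletion.mk_surjective I M x
  ext k
  rw [AdicCompletion.val_sum_apply]
  change Submodule.mkQ _ ((∑ j, a j • φ j) (b k)) = ∑ j, a j • Submodule.mkQ _ (φ j (b k))
  simp only [LinearMap.sum_apply, LinearMap.smul_apply, map_sum, map_smul]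

open TensorProduct in
/-- Over a noetherian commutative ring `A`, the `I`-adic completion of a flat `A`-module is
again flat. -/
theorem stmt11 {A : Type} [CommRing A] [IsNoetherianRing A] (I : Ideal A)
    (M : Type) [AddCommGroup M] [Module A M] [Module.Flat A M] :
    Module.Flat A (AdicCompletion I M) := by
  apply Module.Flat.of_forall_isTrivialRelation
  intro l f x hfx
  let F : (Fin l → A) →ₗ[A] A := Fintype.linearCombination A f
  obtain ⟨n, g0, hg0⟩ := Module.Finite.exists_fin' A (LinearMap.ker F)
  let g : (Fin n → A) →ₗ[A] (Fin l → A) := (LinearMap.ker F).subtype ∘ₗ g0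
  have hgF : Function.Exact g F := by
    rw [LinearMap.exact_iff, LinearMap.range_comp, LinearMap.range_eq_top.2 hg0]
    simp
  have key := aux_exact I (g.lTensor M) (F.lTensor M) (Module.Flat.lTensor_exact M hgF)
    (aux_AR I M g) (aux_AR I M F)
  let ι : Fin l → (M →ₗ[A] M ⊗[A] (Fin l → A)) := fun i =>
    (TensorProduct.mk A M (Fin l → A)).flip (Pi.single i 1)
  let pr (m : ℕ) : Fin m → (M ⊗[A] (Fin m → A) →ₗ[A] M) := fun i =>
    (TensorProduct.rid A M).toLinearMap ∘ₗ (LinearMap.proj i).lTensor M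
  obtain ⟨y, hy⟩ := key (∑ i, AdicCompletion.map I (ι i) (x i)) (by
    have h1 : ∀ i, F.lTensor M ∘ₗ ι i =
        f i • (TensorProduct.rid A M).symm.toLinearMap := by
      intro i
      ext m
      simp [ι, F, Fintype.linearCombination_apply, Pi.single_apply,
        ← TensorProduct.tmul_smul]
    have h2 : ∀ i, AdicCompletion.map I (F.lTensor M) (AdicCompletion.map I (ι i) (x i)) =
        AdicCompletion.map I (TensorProduct.rid A M).symm.toLinearMap (f i • x i) := by
      intro i
      rw [AdicCompletion.map_comp_apply, h1]
      have := aux_map_sum I (fun _ : Fin 1 => f i)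
        (fun _ => (TensorProduct.rid A M).symm.toLinearMap) (x i)
      simp only [Finset.univ_unique, Finset.sum_singleton] at this
      rw [this, LinearMap.map_smul_of_tower]
    rw [map_sum, Finset.sum_congr rfl (fun i _ => h2 i), ← map_sum, hfx, map_zero])
  refine ⟨n, fun i j => g (Pi.single j 1) i, fun j => AdicCompletion.map I (pr n j) y, ?_, ?_⟩
  · intro i
    rw [← aux_map_sum]
    have h3 : ∑ j, g (Pi.single j 1) i • pr n j = pr l i ∘ₗ g.lTensor M := by
      ext m j
      simp [pr, Pi.single_apply]
    rw [h3, ← AdicCompletion.map_comp_apply, hy, map_sum, Finset.sum_eq_single i]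
    · rw [AdicCompletion.map_comp_apply]
      have : pr l i ∘ₗ ι i = LinearMap.id := by
        ext m; simp [pr, ι]
      rw [this, AdicCompletion.map_id]; rfl
    · intro j _ hj
      rw [AdicCompletion.map_comp_apply]
      have : pr l i ∘ₗ ι j = 0 := by
        ext m; simp [pr, ι, hj.symm]
      rw [this, AdicCompletion.map_zero]; rfl
    · simp
  · intro j
    have : F (g (Pi.single j 1)) = 0 := hgF.apply_apply_eq_zero _
    rw [← this]
    simp [F, Fintype.linearCombination_apply, mul_comm]
end

section
/- Let A be a Noetherian commutative ring which is I-adically complete for an ideal I ⊆ A. Let B be a Noetherian A-algebra which is flat as an A-module and which is (I·B)-adically complete, and assume that the induced homomorphism A/I → B/IB is smooth (of finite presentation and formally smooth). Then the (I·B)-adic completion of the module of Kähler differentials Ω_{B/A} is a finitely generated projective B-module. -/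
open TensorProduct

lemma aux_isPushout {A B : Type} [CommRing A] [CommRing B] [Algebra A B] (L : Ideal A) :
    Algebra.IsPushout A (A ⧸ L) B (B ⧸ L.map (algebraMap A B)) := by
  refine ⟨?_⟩
  refine IsBaseChange.of_equiv
    (Algebra.TensorProduct.quotIdealMapEquivQuotTensor B L).symm.toLinearEquiv ?_
  intro x
  exact (Algebra.TensorProduct.quotIdealMapEquivQuotTensor B L).symm_apply_apply
    (Ideal.Quotient.mk _ x)

lemma aux_flat {A B : Type} [CommRing A] [CommRing B] [Algebra A B] [Module.Flat A B]
    (L : Ideal A) : Module.Flat (A ⧸ L) (B ⧸ L.map (algebraMap A B)) :=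
  .of_linearEquiv (Algebra.TensorProduct.quotIdealMapEquivQuotTensor B L).toLinearEquiv

lemma aux_smooth {A B : Type} [CommRing A] [CommRing B] [Algebra A B] [Module.Flat A B]
    (I : Ideal A) (h1 : Algebra.FormallySmooth (A ⧸ I) (B ⧸ I.map (algebraMap A B))) (n : ℕ) :
    Algebra.FormallySmooth (A ⧸ I ^ (n + 1)) (B ⧸ (I ^ (n + 1)).map (algebraMap A B)) := by
  induction n with
  | zero =>
    have : ∀ L : Ideal A, L = I →
        Algebra.FormallySmooth (A ⧸ L) (B ⧸ L.map (algebraMap A B)) := by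
      rintro _ rfl
      exact h1
    exact this _ (by simp)
  | succ n ih =>
    have hle : I ^ (n + 1 + 1) ≤ I ^ (n + 1) := Ideal.pow_le_pow_right (by omega)
    have hle' := Ideal.map_mono (f := algebraMap A B) hle
    rw [← RingHom.formallySmooth_algebraMap]
    rw [← RingHom.formallySmooth_algebraMap] at ih
    refine RingHom.FormallySmooth.of_flat_of_ker_eq_map_of_square_zero _ ?_
      (Ideal.Quotient.factor hle) (Ideal.Quotient.factor hle') _
      (Ideal.Quotient.factor_surjective hle) (Ideal.Quotient.factor_surjective hle')
      ?_ ?_ ?_ ih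
    · rw [RingHom.flat_algebraMap_iff]; exact aux_flat _
    · apply Ideal.Quotient.ringHom_ext
      ext x
      rfl
    · rw [Ideal.Quotient.factor_ker, ← Ideal.map_pow, ← pow_mul, eq_bot_iff,
        Ideal.map_le_iff_le_comap, ← RingHom.ker_eq_comap_bot, Ideal.mk_ker]
      exact Ideal.pow_le_pow_right (by omega)
    · rw [Ideal.Quotient.factor_ker, Ideal.Quotient.factor_ker, Ideal.map_map, Ideal.map_map]
      rfl

lemma aux_lift {A B : Type} [CommRing A] [CommRing B] [Algebra A B] (L : Ideal A)
    (h : Algebra.FormallySmooth (A ⧸ L) (B ⧸ L.map (algebraMap A B)))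
    {X Y : Type} [AddCommGroup X] [AddCommGroup Y] [Module B X] [Module B Y]
    (hX : ∀ b ∈ L.map (algebraMap A B), ∀ x : X, b • x = 0)
    (f : X →ₗ[B] Y) (hf : Function.Surjective f) (g : Ω[B⁄A] →ₗ[B] Y) :
    ∃ k : Ω[B⁄A] →ₗ[B] X, f ∘ₗ k = g := by
  have := aux_isPushout (B := B) L
  set T := B ⧸ L.map (algebraMap A B) with hT
  have hp : Module.Projective T (T ⊗[B] Ω[B⁄A]) :=
    Module.Projective.of_equiv (KaehlerDifferential.tensorKaehlerEquiv A (A ⧸ L) B T).symm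
  have hX' : Module.IsTorsionBySet B X (L.map (algebraMap A B)) := fun x b => hX b.1 b.2 x
  have hY' : Module.IsTorsionBySet B Y (L.map (algebraMap A B)) := fun y b => by
    obtain ⟨x, rfl⟩ := hf y
    rw [← map_smul, hX', map_zero]
  let : Module T X := hX'.module
  let : Module T Y := hY'.module
  have : IsScalarTower B T X := hX'.isScalarTower
  have : IsScalarTower B T Y := hY'.isScalarTower
  let f' : X →ₗ[T] Y := f.extendScalarsOfSurjective Ideal.Quotient.mk_surjective
  obtain ⟨k, hk⟩ := Module.projective_lifting_property f' (g.liftBaseChange T) hf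
  refine ⟨k.restrictScalars B ∘ₗ TensorProduct.mk B T _ 1, ?_⟩
  refine LinearMap.ext fun x ↦ ?_
  have := LinearMap.congr_fun hk (1 ⊗ₜ x)
  simpa [f'] using this

lemma aux_fin {A B : Type} [CommRing A] [CommRing B] [Algebra A B] (L : Ideal A)
    [Algebra.Smooth (A ⧸ L) (B ⧸ L.map (algebraMap A B))] :
    Module.Finite B (Ω[B⁄A] ⧸ (L.map (algebraMap A B) • ⊤ : Submodule B Ω[B⁄A])) := by
  have := aux_isPushout (B := B) L
  set T := B ⧸ L.map (algebraMap A B) with hT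
  have hp : Module.Finite T (T ⊗[B] Ω[B⁄A]) :=
    Module.Finite.equiv (KaehlerDifferential.tensorKaehlerEquiv A (A ⧸ L) B T).symm
  have : Module.Finite B (T ⊗[B] Ω[B⁄A]) := .trans T _
  exact Module.Finite.equiv (TensorProduct.quotTensorEquivQuotSMul Ω[B⁄A] (L.map (algebraMap A B)))

lemma aux_pi {B : Type} [CommRing B] (J : Ideal B) [IsAdicComplete J B] (m : ℕ) :
    IsAdicComplete J (Fin m → B) := by
  rw [← AdicCompletion.of_bijective_iff]
  have h1 : Function.Bijective (AdicCompletion.piEquivFin J m ∘ AdicCompletion.of J (Fin m → B)) := by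
    have : (AdicCompletion.piEquivFin J m ∘ AdicCompletion.of J (Fin m → B)) =
        Pi.map (fun _ => AdicCompletion.of J B) := by
      ext x j n
      simp [AdicCompletion.piEquivFin_apply, AdicCompletion.pi]
      rfl
    rw [this]
    exact Function.Bijective.piMap fun _ => AdicCompletion.of_bijective J B
  exact (Function.Bijective.of_comp_iff' (AdicCompletion.piEquivFin J m).bijective _).mp h1

/-- projectivity modulo `J ^ n` in terms of lifting -/
def LiftProp {B : Type} [CommRing B] (J : Ideal B) (M : Type) [AddCommGroup M] [Module B M] : Prop :=
  ∀ (n : ℕ) (X Y : Type) [AddCommGroup X] [AddCommGroup Y] [Module B X] [Module B Y]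
    (_ : ∀ b ∈ J ^ n, ∀ x : X, b • x = 0)
    (f : X →ₗ[B] Y) (_ : Function.Surjective f) (g : M →ₗ[B] Y),
    ∃ k : M →ₗ[B] X, f ∘ₗ k = g

lemma aux_kill {B : Type} [CommRing B] {K : Ideal B} {N X : Type} [AddCommGroup N] [Module B N]
    [AddCommGroup X] [Module B X] (hX : ∀ b ∈ K, ∀ x : X, b • x = 0) (g : N →ₗ[B] X) :
    (K • ⊤ : Submodule B N) ≤ LinearMap.ker g := by
  rw [Submodule.smul_le]
  intro r hr n _
  rw [LinearMap.mem_ker, map_smul, hX r hr]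

lemma aux_kill_quot {B : Type} [CommRing B] (K : Ideal B) (N : Type) [AddCommGroup N] [Module B N]
    (b : B) (hb : b ∈ K) (x : N ⧸ (K • ⊤ : Submodule B N)) : b • x = 0 := by
  obtain ⟨y, rfl⟩ := Submodule.Quotient.mk_surjective _ x
  rw [← Submodule.Quotient.mk_smul, Submodule.Quotient.mk_eq_zero]
  exact Submodule.smul_mem_smul hb trivial

lemma LiftProp.completion {B : Type} [CommRing B] {J : Ideal B} (hJ : J.FG) {M : Type}
    [AddCommGroup M] [Module B M] (h : LiftProp J M) : LiftProp J (AdicCompletion J M) := by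
  intro n X Y _ _ _ _ hX f hf g
  obtain ⟨k, hk⟩ := h n X Y hX f hf (g ∘ₗ AdicCompletion.of J M)
  refine ⟨(Submodule.liftQ _ k (aux_kill hX k)) ∘ₗ AdicCompletion.eval J M n, ?_⟩
  have hY : ∀ b ∈ J ^ n, ∀ y : Y, b • y = 0 := by
    intro b hb y
    obtain ⟨x, rfl⟩ := hf y
    rw [← map_smul, hX b hb, map_zero]
  refine LinearMap.ext fun x ↦ ?_
  obtain ⟨m, hm⟩ := Submodule.Quotient.mk_surjective _ (AdicCompletion.eval J M n x)
  have hz : x - AdicCompletion.of J M m ∈ (J ^ n • ⊤ : Submodule B (AdicCompletion J M)) := by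
    rw [AdicCompletion.pow_smul_top_eq_ker_eval hJ, LinearMap.mem_ker, map_sub, ← hm,
      AdicCompletion.eval_of, Submodule.mkQ_apply, sub_self]
  have := aux_kill hY g hz
  rw [LinearMap.mem_ker, map_sub, sub_eq_zero] at this
  rw [this, LinearMap.comp_apply, LinearMap.comp_apply, ← hm]
  exact LinearMap.congr_fun hk m

lemma aux_step {B : Type} [CommRing B] {J : Ideal B} {N F : Type}
    [AddCommGroup N] [Module B N] [AddCommGroup F] [Module B F] (h : LiftProp J N)
    (f : F →ₗ[B] N) (hf : Function.Surjective f) (n : ℕ)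
    (s : N →ₗ[B] F ⧸ (J ^ n • ⊤ : Submodule B F))
    (hs : ∀ x y, s x = Submodule.Quotient.mk y → x - f y ∈ (J ^ n • ⊤ : Submodule B N)) :
    ∃ t : N →ₗ[B] F ⧸ (J ^ (n + 1) • ⊤ : Submodule B F),
      (∀ x y, t x = Submodule.Quotient.mk y → x - f y ∈ (J ^ (n + 1) • ⊤ : Submodule B N)) ∧
      Submodule.factorPow J F n.le_succ ∘ₗ t = s := by
  have hmap : ∀ n, (J ^ n • ⊤ : Submodule B F) ≤ (J ^ n • ⊤ : Submodule B N).comap f := by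
    intro n
    rw [← Submodule.map_le_iff_le_comap, Submodule.map_smul'']
    exact Submodule.smul_mono le_rfl le_top
  let φ : F ⧸ (J ^ (n + 1) • ⊤ : Submodule B F) →ₗ[B]
      (N ⧸ (J ^ (n + 1) • ⊤ : Submodule B N)) × (F ⧸ (J ^ n • ⊤ : Submodule B F)) :=
    (Submodule.mapQ _ _ f (hmap _)).prod (Submodule.factorPow J F n.le_succ)
  have hφ : ∀ y : F, φ (Submodule.Quotient.mk y) =
    (Submodule.Quotient.mk (f y), Submodule.Quotient.mk y) := fun _ => rfl
  let g : N →ₗ[B] LinearMap.range φ :=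
    LinearMap.codRestrict _ ((Submodule.mkQ _).prod s) (by
      intro x
      obtain ⟨y, hy⟩ := Submodule.Quotient.mk_surjective _ (s x)
      have h1 := hs x y hy.symm
      have h2 : x - f y ∈ (J ^ n • ⊤ : Submodule B F).map f := by
        rwa [Submodule.map_smul'', Submodule.map_top, LinearMap.range_eq_top.mpr hf]
      obtain ⟨z, hz, hzx⟩ := h2
      refine ⟨Submodule.Quotient.mk (y + z), ?_⟩
      rw [hφ]
      refine Prod.ext ?_ ?_
      · simp [hzx]
      · simpa [← hy] using hz)
  obtain ⟨t, ht⟩ := h (n + 1) _ _ (aux_kill_quot _ _) φ.rangeRestrict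
    φ.surjective_rangeRestrict g
  have ht' : ∀ x, φ (t x) = (Submodule.Quotient.mk x, s x) := fun x =>
    congrArg Subtype.val (LinearMap.congr_fun ht x)
  refine ⟨t, ?_, ?_⟩
  · intro x y hxy
    have := ht' x
    rw [hxy, hφ] at this
    exact (Submodule.Quotient.eq _).mp (congrArg Prod.fst this).symm
  · refine LinearMap.ext fun x ↦ ?_
    exact congrArg Prod.snd (ht' x)

lemma aux_main_s12 {B : Type} [CommRing B] {J : Ideal B} {N F : Type}
    [AddCommGroup N] [Module B N] [AddCommGroup F] [Module B F] (h : LiftProp J N)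
    [IsAdicComplete J F] [IsHausdorff J N]
    (f : F →ₗ[B] N) (hf : Function.Surjective f) : ∃ s : N →ₗ[B] F, f ∘ₗ s = LinearMap.id := by
  let P (n : ℕ) := {s : N →ₗ[B] F ⧸ (J ^ n • ⊤ : Submodule B F) //
    ∀ x y, s x = Submodule.Quotient.mk y → x - f y ∈ (J ^ n • ⊤ : Submodule B N)}
  let s : ∀ n, P n := fun n => Nat.rec (motive := P) ⟨0, by simp⟩
    (fun n s => ⟨(aux_step h f hf n s.1 s.2).choose,
      (aux_step h f hf n s.1 s.2).choose_spec.1⟩) n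
  have hs : ∀ n, Submodule.factorPow J F n.le_succ ∘ₗ (s (n + 1)).1 = (s n).1 := fun n =>
    (aux_step h f hf n (s n).1 (s n).2).choose_spec.2
  have hs' : ∀ {m n : ℕ} (hle : m ≤ n), Submodule.factorPow J F hle ∘ₗ (s n).1 = (s m).1 := by
    intro m n hle
    induction n, hle using Nat.le_induction with
    | base => ext x; simp
    | succ n hmn ih =>
      rw [← ih, ← hs n, ← LinearMap.comp_assoc]
      congr 1
      ext x
      simp
  refine ⟨IsAdicComplete.lift J (fun n => (s n).1) hs', ?_⟩
  refine LinearMap.ext fun x ↦ ?_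
  rw [IsHausdorff.eq_iff_smodEq (I := J)]
  intro n
  refine SModEq.symm ?_
  rw [SModEq.sub_mem]
  exact (s n).2 x _ (IsAdicComplete.mk_lift J hs' n x).symm

theorem stmt12 {A B : Type} [CommRing A] [CommRing B] [Algebra A B]
    [IsNoetherianRing A] [IsNoetherianRing B] (I : Ideal A)
    [IsAdicComplete I A] [Module.Flat A B]
    [IsAdicComplete (I.map (algebraMap A B)) B]
    [Algebra.Smooth (A ⧸ I) (B ⧸ I.map (algebraMap A B))] :
    Module.Finite B
        (AdicCompletion (I.map (algebraMap A B)) (KaehlerDifferential A B)) ∧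
      Module.Projective B
        (AdicCompletion (I.map (algebraMap A B)) (KaehlerDifferential A B)) := by
  have hfin := aux_fin (B := B) I
  have hlift : LiftProp (I.map (algebraMap A B)) Ω[B⁄A] := by
    intro n X Y _ _ _ _ hX f hf g
    refine aux_lift (I ^ (n + 1)) (aux_smooth I inferInstance n) ?_ f hf g
    intro b hb
    rw [Ideal.map_pow] at hb
    exact hX b (Ideal.pow_le_pow_right n.le_succ hb)
  let J := I.map (algebraMap A B)
  have hJ : J.FG := IsNoetherian.noetherian J
  have hc := hlift.completion hJ
  obtain ⟨m, p, hp⟩ := Module.Finite.exists_fin' B (Ω[B⁄A] ⧸ (J • ⊤ : Submodule B Ω[B⁄A]))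
  have := aux_pi J m
  obtain ⟨q, hq⟩ := Module.projective_lifting_property (Submodule.mkQ (J • ⊤ : Submodule B Ω[B⁄A]))
    p (Submodule.mkQ_surjective _)
  have hsurj : Function.Surjective (AdicCompletion.of J Ω[B⁄A] ∘ₗ q) := by
    apply surjective_of_mkQ_comp_surjective (I := J)
    intro y
    obtain ⟨y, rfl⟩ := Submodule.mkQ_surjective _ y
    obtain ⟨w, hw⟩ := Submodule.mkQ_surjective _ (AdicCompletion.eval J Ω[B⁄A] 1 y)
    obtain ⟨x, hx⟩ := hp (Submodule.mkQ _ w)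
    refine ⟨x, ?_⟩
    rw [← hq] at hx
    have hx' : q x - w ∈ (J • ⊤ : Submodule B Ω[B⁄A]) := (Submodule.Quotient.eq _).mp hx
    have h3 : AdicCompletion.of J Ω[B⁄A] (q x) - y ∈
        (J ^ 1 • ⊤ : Submodule B (AdicCompletion J Ω[B⁄A])) := by
      rw [AdicCompletion.pow_smul_top_eq_ker_eval hJ, LinearMap.mem_ker, map_sub, ← hw,
        AdicCompletion.eval_of, ← map_sub, Submodule.mkQ_apply, Submodule.Quotient.mk_eq_zero,
        pow_one]
      exact hx'
    rw [pow_one] at h3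
    exact (Submodule.Quotient.eq _).mpr h3
  obtain ⟨s, hs⟩ := aux_main_s12 hc _ hsurj
  exact ⟨Module.Finite.of_surjective _ hsurj, Module.Projective.of_split s _ hs⟩
end
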